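/- arXiv:math/0403171 — 3 statements merged into one kernel-verified Lean document; each statement's English description precedes it below -/
import Mathlib

section
/- Let V be a finite-dimensional real vector space with dual V∨, T > 0, and let α ∈ V, α∨ ∈ V∨ satisfy α∨(α) = 2. On continuous paths π : [0,T] → V with π(0) = 0 one has the identities: (a) E_α ∘ E_α = E_α; (b) E_α ∘ P_α = E_α; (c) P_α ∘ E_α = P_α; (d) for every such path π, (E_α π)(T) = s_α( (P_α π)(T) ). -/
/-- The Pitman transform associated with a pair `(α, α∨)`:
`P_α π (t) = π t − (inf_{0 ≤ s ≤ t} α∨(π s)) • α`. -/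
noncomputable def pitman {V : Type*} [AddCommGroup V] [Module ℝ V]
    (α : V) (αv : Module.Dual ℝ V) (π : ℝ → V) : ℝ → V :=
  fun t => π t - sInf ((fun s => αv (π s)) '' Set.Icc 0 t) • α

/-- The co-Pitman transform `E_α = κ ∘ P_α ∘ κ` on paths on `[0,T]`:
`E_α π (t) = π t − (inf_{t ≤ s ≤ T} α∨(π s)) • α + (inf_{0 ≤ s ≤ T} α∨(π s)) • α`. -/
noncomputable def copitman {V : Type*} [AddCommGroup V] [Module ℝ V]
    (T : ℝ) (α : V) (αv : Module.Dual ℝ V) (π : ℝ → V) : ℝ → V :=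
  fun t => π t - sInf ((fun s => αv (π s)) '' Set.Icc t T) • α
            + sInf ((fun s => αv (π s)) '' Set.Icc 0 T) • α


section helpers

lemma aux_least {f : ℝ → ℝ} {a b : ℝ} (hab : a ≤ b) (hf : ContinuousOn f (Set.Icc a b)) :
    IsLeast (f '' Set.Icc a b) (sInf (f '' Set.Icc a b)) :=
  (isCompact_Icc.image_of_continuousOn hf).isLeast_sInf ((Set.nonempty_Icc.2 hab).image f)

lemma aux_cross {f : ℝ → ℝ} {a b c : ℝ} (hf : ContinuousOn f (Set.Icc a b)) (ha : c ≤ f a)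
    (hx : ∃ x ∈ Set.Icc a b, f x ≤ c) :
    ∃ s ∈ Set.Icc a b, f s = c ∧ ∀ u ∈ Set.Icc a s, c ≤ f u := by
  have hcl : IsClosed (Set.Icc a b ∩ f ⁻¹' Set.Iic c) :=
    hf.preimage_isClosed_of_isClosed isClosed_Icc isClosed_Iic
  have hco : IsCompact (Set.Icc a b ∩ f ⁻¹' Set.Iic c) :=
    isCompact_Icc.of_isClosed_subset hcl Set.inter_subset_left
  obtain ⟨x, hx1, hx2⟩ := hx
  obtain ⟨s, ⟨hs1, hs2⟩, hs3⟩ := hco.exists_isLeast ⟨x, hx1, hx2⟩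
  have hs2' : f s ≤ c := hs2
  have hsub : ContinuousOn f (Set.Icc a s) := hf.mono (Set.Icc_subset_Icc le_rfl hs1.2)
  obtain ⟨u, hu, huc⟩ := intermediate_value_Icc' hs1.1 hsub ⟨hs2', ha⟩
  have hus : s ≤ u := hs3 ⟨⟨hu.1, hu.2.trans hs1.2⟩, le_of_eq huc⟩
  have hus' : u = s := le_antisymm hu.2 hus
  subst hus'
  refine ⟨u, hs1, huc, fun v hv => ?_⟩
  by_contra! h
  have h1 : u ≤ v := hs3 ⟨⟨hv.1, hv.2.trans hs1.2⟩, h.le⟩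
  have h2 : v = u := le_antisymm hv.2 h1
  rw [h2] at h
  linarith

lemma aux_cross' {f : ℝ → ℝ} {a b c : ℝ} (hf : ContinuousOn f (Set.Icc a b)) (hb : c ≤ f b)
    (hx : ∃ x ∈ Set.Icc a b, f x ≤ c) :
    ∃ s ∈ Set.Icc a b, f s = c ∧ ∀ u ∈ Set.Icc s b, c ≤ f u := by
  have hf' : ContinuousOn (fun x => f (-x)) (Set.Icc (-b) (-a)) :=
    hf.comp continuous_neg.continuousOn (fun x hx => ⟨by linarith [hx.2], by linarith [hx.1]⟩)
  obtain ⟨x, hx1, hx2⟩ := hx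
  obtain ⟨s, hs, h1, h2⟩ := aux_cross (c := c) hf' (by simpa using hb)
    ⟨-x, ⟨by linarith [hx1.2], by linarith [hx1.1]⟩, by simpa using hx2⟩
  refine ⟨-s, ⟨by linarith [hs.2], by linarith [hs.1]⟩, h1, fun u hu => ?_⟩
  simpa using h2 (-u) ⟨by linarith [hu.2], by linarith [hu.1]⟩

variable {f : ℝ → ℝ} {T : ℝ}

lemma aux_min (hf : ContinuousOn f (Set.Icc 0 T)) {t : ℝ} (ht : t ∈ Set.Icc 0 T) :
    sInf (f '' Set.Icc 0 T) = min (sInf (f '' Set.Icc 0 t)) (sInf (f '' Set.Icc t T)) := by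
  have h1 := aux_least ht.1 (hf.mono (Set.Icc_subset_Icc le_rfl ht.2))
  have h2 := aux_least ht.2 (hf.mono (Set.Icc_subset_Icc ht.1 le_rfl))
  rw [← Set.Icc_union_Icc_eq_Icc ht.1 ht.2, Set.image_union]
  exact (h1.union h2).csInf_eq

lemma aux_a (hf : ContinuousOn f (Set.Icc 0 T)) {t : ℝ} (ht : t ∈ Set.Icc 0 T) (I : ℝ) :
    sInf ((fun s => f s - 2 * sInf (f '' Set.Icc s T) + 2 * I) '' Set.Icc t T)
      = 2 * I - f T := by
  apply IsLeast.csInf_eq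
  refine ⟨⟨T, ⟨ht.2, le_rfl⟩, ?_⟩, ?_⟩
  · simp; ring
  · rintro _ ⟨s, hs, rfl⟩
    have h2 := (aux_least hs.2 (hf.mono (Set.Icc_subset_Icc (ht.1.trans hs.1) le_rfl))).2
    have h3 := h2 ⟨s, ⟨le_rfl, hs.2⟩, rfl⟩
    have h4 := h2 ⟨T, ⟨hs.2, le_rfl⟩, rfl⟩
    dsimp only
    linarith

lemma aux_b (hf : ContinuousOn f (Set.Icc 0 T)) {t : ℝ} (ht : t ∈ Set.Icc 0 T) :
    sInf ((fun s => f s - 2 * sInf (f '' Set.Icc 0 s)) '' Set.Icc t T)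
      = sInf (f '' Set.Icc t T) - sInf (f '' Set.Icc 0 T) - sInf (f '' Set.Icc 0 t) := by
  have L : ∀ s ∈ Set.Icc 0 T, IsLeast (f '' Set.Icc 0 s) (sInf (f '' Set.Icc 0 s)) :=
    fun s hs => aux_least hs.1 (hf.mono (Set.Icc_subset_Icc le_rfl hs.2))
  have hfr : ContinuousOn f (Set.Icc t T) := hf.mono (Set.Icc_subset_Icc ht.1 le_rfl)
  have R := aux_least ht.2 hfr
  have Lt := L t ht
  rw [aux_min hf ht]
  have hmono : ∀ s ∈ Set.Icc t T, sInf (f '' Set.Icc 0 s) ≤ sInf (f '' Set.Icc 0 t) := by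
    intro s hs
    obtain ⟨u, hu, hu'⟩ := Lt.1
    rw [← hu']
    exact (L s ⟨ht.1.trans hs.1, hs.2⟩).2 ⟨u, ⟨hu.1, hu.2.trans hs.1⟩, rfl⟩
  have hconst : ∀ s ∈ Set.Icc t T, (∀ u ∈ Set.Icc t s, sInf (f '' Set.Icc 0 t) ≤ f u) →
      sInf (f '' Set.Icc 0 s) = sInf (f '' Set.Icc 0 t) := by
    intro s hs h
    refine le_antisymm (hmono s hs) ?_
    obtain ⟨u, hu, hu'⟩ := (L s ⟨ht.1.trans hs.1, hs.2⟩).1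
    rw [← hu']
    rcases le_total u t with h' | h'
    · exact Lt.2 ⟨u, ⟨hu.1, h'⟩, rfl⟩
    · exact h u ⟨h', hu.2⟩
  apply IsLeast.csInf_eq
  rcases le_total (sInf (f '' Set.Icc 0 t)) (sInf (f '' Set.Icc t T)) with hc | hc
  · rw [min_eq_left hc]
    have hk : ∀ s ∈ Set.Icc t T, sInf (f '' Set.Icc 0 s) = sInf (f '' Set.Icc 0 t) :=
      fun s hs => hconst s hs fun u hu => hc.trans (R.2 ⟨u, ⟨hu.1, hu.2.trans hs.2⟩, rfl⟩)
    constructor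
    · obtain ⟨u, hu, hu'⟩ := R.1
      refine ⟨u, hu, ?_⟩
      dsimp only
      rw [hk u hu, ← hu']; ring
    · rintro _ ⟨s, hs, rfl⟩
      dsimp only
      rw [hk s hs]
      have := R.2 ⟨s, hs, rfl⟩
      linarith
  · rw [min_eq_right hc]
    constructor
    · obtain ⟨x, hx, hx'⟩ := R.1
      obtain ⟨s, hs, h1, h2⟩ := aux_cross hfr (Lt.2 ⟨t, ⟨ht.1, le_rfl⟩, rfl⟩)
        ⟨x, hx, hx'.le.trans hc⟩
      refine ⟨s, hs, ?_⟩
      dsimp only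
      rw [hconst s hs h2, h1]; ring
    · rintro _ ⟨s, hs, rfl⟩
      dsimp only
      have h1 := hmono s hs
      have h2 := (L s ⟨ht.1.trans hs.1, hs.2⟩).2 ⟨s, ⟨ht.1.trans hs.1, le_rfl⟩, rfl⟩
      linarith

lemma aux_c (hf : ContinuousOn f (Set.Icc 0 T)) {t : ℝ} (ht : t ∈ Set.Icc 0 T) :
    sInf ((fun s => f s - 2 * sInf (f '' Set.Icc s T) + 2 * sInf (f '' Set.Icc 0 T))
        '' Set.Icc 0 t)
      = sInf (f '' Set.Icc 0 t) - sInf (f '' Set.Icc t T) + sInf (f '' Set.Icc 0 T) := by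
  have L : ∀ s ∈ Set.Icc 0 T, IsLeast (f '' Set.Icc s T) (sInf (f '' Set.Icc s T)) :=
    fun s hs => aux_least hs.2 (hf.mono (Set.Icc_subset_Icc hs.1 le_rfl))
  have hfr : ContinuousOn f (Set.Icc 0 t) := hf.mono (Set.Icc_subset_Icc le_rfl ht.2)
  have R := aux_least ht.1 hfr
  have Lt := L t ht
  rw [aux_min hf ht]
  have hmono : ∀ s ∈ Set.Icc 0 t, sInf (f '' Set.Icc s T) ≤ sInf (f '' Set.Icc t T) := by
    intro s hs
    obtain ⟨u, hu, hu'⟩ := Lt.1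
    rw [← hu']
    exact (L s ⟨hs.1, hs.2.trans ht.2⟩).2 ⟨u, ⟨hs.2.trans hu.1, hu.2⟩, rfl⟩
  have hconst : ∀ s ∈ Set.Icc 0 t, (∀ u ∈ Set.Icc s t, sInf (f '' Set.Icc t T) ≤ f u) →
      sInf (f '' Set.Icc s T) = sInf (f '' Set.Icc t T) := by
    intro s hs h
    refine le_antisymm (hmono s hs) ?_
    obtain ⟨u, hu, hu'⟩ := (L s ⟨hs.1, hs.2.trans ht.2⟩).1
    rw [← hu']
    rcases le_total t u with h' | h'
    · exact Lt.2 ⟨u, ⟨h', hu.2⟩, rfl⟩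
    · exact h u ⟨hu.1, h'⟩
  apply IsLeast.csInf_eq
  rcases le_total (sInf (f '' Set.Icc t T)) (sInf (f '' Set.Icc 0 t)) with hc | hc
  · rw [min_eq_right hc]
    have hk : ∀ s ∈ Set.Icc 0 t, sInf (f '' Set.Icc s T) = sInf (f '' Set.Icc t T) :=
      fun s hs => hconst s hs fun u hu => hc.trans (R.2 ⟨u, ⟨hs.1.trans hu.1, hu.2⟩, rfl⟩)
    constructor
    · obtain ⟨u, hu, hu'⟩ := R.1
      refine ⟨u, hu, ?_⟩
      dsimp only
      rw [hk u hu, ← hu']; ring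
    · rintro _ ⟨s, hs, rfl⟩
      dsimp only
      rw [hk s hs]
      have := R.2 ⟨s, hs, rfl⟩
      linarith
  · rw [min_eq_left hc]
    constructor
    · obtain ⟨x, hx, hx'⟩ := R.1
      obtain ⟨s, hs, h1, h2⟩ := aux_cross' hfr (Lt.2 ⟨t, ⟨le_rfl, ht.2⟩, rfl⟩)
        ⟨x, hx, hx'.le.trans hc⟩
      refine ⟨s, hs, ?_⟩
      dsimp only
      rw [hconst s hs h2, h1]; ring
    · rintro _ ⟨s, hs, rfl⟩
      dsimp only
      have h1 := hmono s hs
      have h2 := (L s ⟨hs.1, hs.2.trans ht.2⟩).2 ⟨s, ⟨le_rfl, hs.2.trans ht.2⟩, rfl⟩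
      linarith

end helpers

/-- Identities relating the Pitman transform `P_α` and the co-Pitman transform `E_α`:
(a) `E_α ∘ E_α = E_α`; (b) `E_α ∘ P_α = E_α`; (c) `P_α ∘ E_α = P_α`;
(d) `(E_α π)(T) = s_α((P_α π)(T))` where `s_α v = v − α∨(v) α`. -/
theorem copitman_pitman_identities
    {V : Type*} [NormedAddCommGroup V] [NormedSpace ℝ V] [FiniteDimensional ℝ V]
    (T : ℝ) (hT : 0 < T) (α : V) (αv : Module.Dual ℝ V) (hpair : αv α = 2)
    (π : ℝ → V) (hcont : ContinuousOn π (Set.Icc 0 T)) (h0 : π 0 = 0) :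
    (∀ t ∈ Set.Icc 0 T,
      copitman T α αv (copitman T α αv π) t = copitman T α αv π t) ∧
    (∀ t ∈ Set.Icc 0 T,
      copitman T α αv (pitman α αv π) t = copitman T α αv π t) ∧
    (∀ t ∈ Set.Icc 0 T,
      pitman α αv (copitman T α αv π) t = pitman α αv π t) ∧
    (copitman T α αv π T = pitman α αv π T - αv (pitman α αv π T) • α) := by
  have hf : ContinuousOn (fun s => αv (π s)) (Set.Icc 0 T) :=
    (LinearMap.continuous_of_finiteDimensional αv).comp_continuousOn hcont
  have hf0 : (fun s => αv (π s)) 0 = 0 := by simp [h0]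
  have hE : (fun s => αv (copitman T α αv π s)) = fun s => (fun s => αv (π s)) s
      - 2 * sInf ((fun s => αv (π s)) '' Set.Icc s T)
      + 2 * sInf ((fun s => αv (π s)) '' Set.Icc 0 T) := by
    funext s
    simp only [copitman, map_add, map_sub, map_smul, hpair, smul_eq_mul]
    ring
  have hP : (fun s => αv (pitman α αv π s)) = fun s => (fun s => αv (π s)) s
      - 2 * sInf ((fun s => αv (π s)) '' Set.Icc 0 s) := by
    funext s
    simp only [pitman, map_sub, map_smul, hpair, smul_eq_mul]
    ring
  have h00 : (0 : ℝ) ∈ Set.Icc 0 T := ⟨le_rfl, hT.le⟩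
  refine ⟨fun t ht => ?_, fun t ht => ?_, fun t ht => ?_, ?_⟩
  · rw [copitman, hE, aux_a hf ht, aux_a hf h00]
    abel
  · rw [copitman, hP, aux_b hf ht, aux_b hf h00]
    have : sInf ((fun s => αv (π s)) '' Set.Icc 0 0) = 0 := by simp [h0]
    rw [this]
    simp only [pitman, copitman]
    module
  · rw [pitman, hE, aux_c hf ht]
    simp only [pitman, copitman]
    module
  · have h1 : αv (pitman α αv π T) = _ := congrFun hP T
    rw [h1]
    simp only [pitman, copitman, Set.Icc_self, Set.image_singleton, csInf_singleton]
    module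
end

section
/- In the Coxeter setting below, let π : [0,T] → V be a continuous codominant path with π(0) = 0, let w ∈ W and let s ∈ S be such that ℓ(σ_s w) > ℓ(w), where ℓ is the length function. Then P_w π is α_s-codominant, i.e. α_s∨((P_w π)(t)) ≥ α_s∨((P_w π)(T)) for all t ∈ [0,T]. -/
/-- The composite Pitman transform `P_{α_{s₁}} ∘ ⋯ ∘ P_{α_{s_l}}` along a word
`l = [s₁, …, s_l]` in the generators. -/
noncomputable def pitmanWord {V : Type*} [AddCommGroup V] [Module ℝ V] {B : Type*}
    (α : B → V) (αv : B → Module.Dual ℝ V) (l : List B) : (ℝ → V) → (ℝ → V) :=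
  l.foldr (fun s f => pitman (α s) (αv s) ∘ f) id

namespace PitmanAux

open Set

/-- Running infimum. -/
noncomputable def runInf (f : ℝ → ℝ) : ℝ → ℝ := fun t => sInf (f '' Icc 0 t)

/-- Continuity on `[0, ∞)`. -/
abbrev Co (f : ℝ → ℝ) : Prop := ContinuousOn f (Ici 0)

theorem runInf_neg (f : ℝ → ℝ) {t : ℝ} (ht : t < 0) : runInf f t = 0 := by
  simp [runInf, Icc_eq_empty (not_le.2 ht)]

theorem Co.mono {f : ℝ → ℝ} (hf : Co f) {a b : ℝ} (ha : 0 ≤ a) : ContinuousOn f (Icc a b) :=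
  ContinuousOn.mono hf (fun _ hx => le_trans ha hx.1)

theorem runInf_le {f : ℝ → ℝ} (hf : Co f) {u t : ℝ} (hu : 0 ≤ u) (hut : u ≤ t) :
    runInf f t ≤ f u :=
  csInf_le (isCompact_Icc.image_of_continuousOn (Co.mono hf le_rfl)).bddBelow
    ⟨u, ⟨hu, hut⟩, rfl⟩

theorem le_runInf {f : ℝ → ℝ} {t b : ℝ} (ht : 0 ≤ t) (h : ∀ u, 0 ≤ u → u ≤ t → b ≤ f u) :
    b ≤ runInf f t := by
  apply le_csInf
  · exact ⟨f 0, 0, ⟨le_rfl, ht⟩, rfl⟩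
  · rintro _ ⟨u, hu, rfl⟩
    exact h u hu.1 hu.2

theorem exists_runInf {f : ℝ → ℝ} (hf : Co f) {t : ℝ} (ht : 0 ≤ t) :
    ∃ u, 0 ≤ u ∧ u ≤ t ∧ f u = runInf f t := by
  obtain ⟨u, hu, h⟩ := (isCompact_Icc (a := (0 : ℝ)) (b := t)).exists_isMinOn
    ⟨0, le_rfl, ht⟩ (Co.mono hf le_rfl)
  refine ⟨u, hu.1, hu.2, le_antisymm ?_ (runInf_le hf hu.1 hu.2)⟩
  exact le_runInf ht fun v hv hvt => h ⟨hv, hvt⟩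

theorem runInf_anti {f : ℝ → ℝ} (hf : Co f) {u t : ℝ} (hu : 0 ≤ u) (hut : u ≤ t) :
    runInf f t ≤ runInf f u :=
  le_runInf hu fun _ hv hvu => runInf_le hf hv (hvu.trans hut)

theorem co_runInf {f : ℝ → ℝ} (hf : Co f) : Co (runInf f) := by
  have hg : Continuous fun x : ℝ => f (max 0 x) :=
    ContinuousOn.comp_continuous hf (by fun_prop) (fun x => mem_Ici.2 (le_max_left _ _))
  have h := (isCompact_Icc (a := (0 : ℝ)) (b := 1)).continuous_sInf
    (f := fun (t : ℝ) (r : ℝ) => f (max 0 (r * t)))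
    (by
      have : Continuous fun p : ℝ × ℝ => f (max 0 (p.2 * p.1)) :=
        hg.comp (by fun_prop : Continuous fun p : ℝ × ℝ => p.2 * p.1)
      exact this)
  refine h.continuousOn.congr fun t (ht : 0 ≤ t) => ?_
  unfold runInf
  congr 1
  ext y
  constructor
  · rintro ⟨u, ⟨hu, hut⟩, rfl⟩
    rcases ht.eq_or_lt with h0 | h0
    · refine ⟨0, ⟨le_rfl, zero_le_one⟩, ?_⟩
      have : u = 0 := by linarith
      simp [this]
    · refine ⟨u / t, ⟨by positivity, (div_le_one h0).2 hut⟩, ?_⟩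
      simp [div_mul_cancel₀ _ h0.ne', hu]
  · rintro ⟨r, ⟨hr, hr1⟩, rfl⟩
    have h1 : 0 ≤ r * t := by positivity
    exact ⟨r * t, ⟨h1, by nlinarith⟩, by simp [h1]⟩

theorem runInf_congr {f g : ℝ → ℝ} {t : ℝ} (h : ∀ u, 0 ≤ u → u ≤ t → f u = g u) :
    runInf f t = runInf g t := by
  unfold runInf
  rw [Set.image_congr (fun u hu => h u hu.1 hu.2)]

theorem runInf_mul {f : ℝ → ℝ} (hf : Co f) {c : ℝ} (hc : 0 ≤ c) (t : ℝ) :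
    runInf (fun x => c * f x) t = c * runInf f t := by
  rcases lt_or_ge t 0 with ht | ht
  · simp [runInf_neg _ ht]
  obtain ⟨u, hu, hut, h⟩ := exists_runInf hf ht
  apply le_antisymm
  · rw [← h]
    exact runInf_le (f := fun x => c * f x) (by unfold Co at *; fun_prop) hu hut
  · exact le_runInf ht fun v hv hvt => mul_le_mul_of_nonneg_left (runInf_le hf hv hvt) hc

theorem interval_A {Z : ℝ → ℝ} (hZ : Co Z) {p x q : ℝ} (hp : 0 ≤ p) (hpx : p ≤ x) (hxq : x ≤ q) :
    ∃ y, p ≤ y ∧ y ≤ q ∧ Z y ≤ Z x - 2 * runInf Z x + runInf Z p + runInf Z q := by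
  obtain ⟨r, hr, hrq, h⟩ := exists_runInf hZ (hp.trans (hpx.trans hxq))
  have h1 := runInf_anti hZ hp hpx
  have h2 := runInf_anti hZ (hp.trans hpx) hxq
  rcases le_total p r with h3 | h3
  · refine ⟨r, h3, hrq, ?_⟩
    have h4 := runInf_le hZ (hp.trans hpx) le_rfl
    linarith
  · refine ⟨x, hpx, hxq, ?_⟩
    have h4 := runInf_le hZ hr h3
    linarith

theorem interval_B {Z : ℝ → ℝ} (hZ : Co Z) {p x q : ℝ} (hp : 0 ≤ p) (hpx : p ≤ x) (hxq : x ≤ q) :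
    ∃ y, p ≤ y ∧ y ≤ q ∧ Z y - 2 * runInf Z y + runInf Z p + runInf Z q ≤ Z x := by
  obtain ⟨m, hm, hmin⟩ := (isCompact_Icc (a := p) (b := q)).exists_isMinOn
    ⟨x, hpx, hxq⟩ (Co.mono hZ hp)
  have hmx : Z m ≤ Z x := hmin ⟨hpx, hxq⟩
  have hq : 0 ≤ q := hp.trans (hpx.trans hxq)
  rcases le_or_gt (runInf Z p) (Z m) with h | h
  · have h1 : runInf Z p ≤ runInf Z q := le_runInf hq fun u hu huq => by
      rcases le_total u p with h2 | h2
      · exact runInf_le hZ hu h2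
      · exact h.trans (hmin ⟨h2, huq⟩)
    have h2 := runInf_anti hZ hp hm.1
    have h3 := runInf_anti hZ (hp.trans hm.1) hm.2
    exact ⟨m, hm.1, hm.2, by linarith⟩
  · have hcl : IsCompact (Icc p m ∩ Z ⁻¹' Iic (runInf Z p)) :=
      isCompact_Icc.of_isClosed_subset
        ((Co.mono hZ hp).preimage_isClosed_of_isClosed isClosed_Icc isClosed_Iic)
        inter_subset_left
    obtain ⟨y, ⟨⟨hpy, hym⟩, hZy⟩, hleast⟩ := hcl.exists_isLeast ⟨m, ⟨hm.1, le_rfl⟩, h.le⟩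
    have hZy' : Z y ≤ runInf Z p := hZy
    have hy0 : 0 ≤ y := hp.trans hpy
    obtain ⟨y', hy', hZy2⟩ := intermediate_value_Icc' hpy (Co.mono hZ hp)
      (show runInf Z p ∈ Icc (Z y) (Z p) from ⟨hZy', runInf_le hZ hp le_rfl⟩)
    have h1 : y ≤ y' := hleast ⟨⟨hy'.1, hy'.2.trans hym⟩, hZy2.le⟩
    have h2 : y' = y := le_antisymm hy'.2 h1
    rw [h2] at hZy2
    have h3 : Z y ≤ runInf Z y := le_runInf hy0 fun u hu huy => by
      rcases le_total u p with h4 | h4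
      · rw [hZy2]; exact runInf_le hZ hu h4
      · by_contra hcon
        have := hleast ⟨⟨h4, huy.trans hym⟩, show Z u ≤ runInf Z p by linarith⟩
        have h5 : u = y := le_antisymm huy this
        rw [h5] at hcon
        exact hcon le_rfl
    have h4 := runInf_le hZ (hp.trans hpx) hxq
    exact ⟨y, hpy, hym.trans hm.2, by linarith⟩

theorem key_swap {Z h : ℝ → ℝ} (hZ : Co Z) (hh : Co h) {c : ℝ} (hc : 0 ≤ c) (q : ℝ) :
    runInf (fun x => c * (Z x - 2 * runInf Z x) + runInf (fun p => h p + c * runInf Z p) x) q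
      + c * runInf Z q = runInf (fun x => c * Z x + runInf h x) q := by
  rcases lt_or_ge q 0 with hq | hq
  · simp [runInf_neg _ hq]
  have hIZ := co_runInf hZ
  have hIh := co_runInf hh
  have hk : Co (fun p => h p + c * runInf Z p) := by unfold Co at *; fun_prop
  have hIk := co_runInf hk
  have hL : Co (fun x => c * (Z x - 2 * runInf Z x) + runInf (fun p => h p + c * runInf Z p) x) := by
    unfold Co at *; fun_prop
  have hR : Co (fun x => c * Z x + runInf h x) := by unfold Co at *; fun_prop
  apply le_antisymm
  · obtain ⟨x, hx, hxq, h1⟩ := exists_runInf hR hq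
    obtain ⟨p, hp, hpx, h2⟩ := exists_runInf hh hx
    obtain ⟨y, hpy, hyq, h3⟩ := interval_B hZ hp hpx hxq
    rw [← h1, ← h2]
    have h4 := runInf_le hL (hp.trans hpy) hyq
    have h5 := runInf_le hk hp hpy
    have h6 := mul_le_mul_of_nonneg_left h3 hc
    linarith
  · obtain ⟨x, hx, hxq, h1⟩ := exists_runInf hL hq
    obtain ⟨p, hp, hpx, h2⟩ := exists_runInf hk hx
    obtain ⟨y, hpy, hyq, h3⟩ := interval_A hZ hp hpx hxq
    rw [← h1, ← h2]
    have h4 := runInf_le hR (hp.trans hpy) hyq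
    have h5 := runInf_le hh hp hpy
    have h6 := mul_le_mul_of_nonneg_left h3 hc
    linarith

/-- Nested running infima with weights. -/
noncomputable def nest (c : ℕ → ℝ) (Z : ℕ → ℝ → ℝ) : ℕ → ℕ → ℝ → ℝ
  | 0, _ => fun _ => 0
  | n + 1, i => runInf (fun x => c i * Z i x + nest c Z n (i + 1) x)

theorem co_nest {c : ℕ → ℝ} {Z : ℕ → ℝ → ℝ} (hZ : ∀ i, Co (Z i)) (n i : ℕ) :
    Co (nest c Z n i) := by
  induction n generalizing i with
  | zero => exact continuousOn_const
  | succ n ih =>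
    apply co_runInf
    have h1 := hZ i
    have h2 := ih (i + 1)
    unfold Co at *
    fun_prop

theorem nest_drop {c : ℕ → ℝ} {Z : ℕ → ℝ → ℝ} (n i : ℕ) (h : c (i + n) = 0) :
    nest c Z (n + 1) i = nest c Z n i := by
  induction n generalizing i with
  | zero =>
    funext t
    have : c i = 0 := by simpa using h
    simp only [nest, this, zero_mul, add_zero]
    rcases lt_or_ge t 0 with ht | ht
    · simp [runInf_neg _ ht]
    · have : Set.Nonempty (Icc 0 t) := ⟨0, le_rfl, ht⟩
      simp [runInf, this]
  | succ n ih =>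
    rw [nest, ih (i + 1) (by rw [← h]; congr 1; ring)]
    rfl

/-- Peeling off the innermost letter, odd case. -/
theorem nest_odd {c : ℕ → ℝ} {Z Z' : ℕ → ℝ → ℝ} {z : ℝ → ℝ} (hz : Co z) (hZ : ∀ i, Co (Z i))
    (N : ℕ) (hc : ∀ i, i < N → 0 ≤ c i) (j i : ℕ) (hN : i + 2 * j < N)
    (h1 : ∀ k, Z (i + 2 * k) = z)
    (h2 : ∀ k x, Z' (i + 2 * k) x = z x - 2 * runInf z x)
    (h3 : ∀ k x, c (i + 2 * k + 1) * Z' (i + 2 * k + 1) x =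
      c (i + 2 * k + 1) * Z (i + 2 * k + 1) x + (c (i + 2 * k + 2) + c (i + 2 * k)) * runInf z x)
    (t : ℝ) :
    nest c Z' (2 * j) i t + c i * runInf z t = nest c Z (2 * j + 1) i t := by
  induction j generalizing i t with
  | zero =>
    have := h1 0
    simp only [mul_zero, add_zero] at this
    simp [nest, this, runInf_mul hz (hc i (by omega))]
  | succ j ih =>
    have ih' := fun t => ih (i + 2) (by omega) (fun k => by rw [← h1 (k + 1)]; congr 1; ring)
      (fun k x => by rw [← h2 (k + 1), show i + 2 * (k + 1) = i + 2 + 2 * k by ring])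
      (fun k x => by
        have := h3 (k + 1) x
        rw [show i + 2 * (k + 1) = i + 2 + 2 * k by ring] at this
        exact this) t
    have e1 := h1 0
    have e2 := h2 0
    have e3 := h3 0
    simp only [mul_zero, add_zero] at e1 e2 e3
    have hh : Co (fun x => c (i + 1) * Z (i + 1) x + nest c Z (2 * j + 1) (i + 2) x) := by
      have g1 := hZ (i + 1)
      have g2 := co_nest (c := c) hZ (2 * j + 1) (i + 2)
      unfold Co at *
      fun_prop
    have key := key_swap hz hh (hc i (by omega)) t
    have hL : nest c Z' (2 * (j + 1)) i = runInf (fun x => c i * (z x - 2 * runInf z x) +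
        runInf (fun p => (c (i + 1) * Z (i + 1) p + nest c Z (2 * j + 1) (i + 2) p)
          + c i * runInf z p) x) := by
      rw [show 2 * (j + 1) = 2 * j + 1 + 1 by ring]
      simp only [nest, e2]
      congr 1
      funext x
      congr 2
      funext p
      rw [e3]
      have := ih' p
      simp only [nest] at this
      rw [← this]
      ring
    have hR : nest c Z (2 * (j + 1) + 1) i = runInf (fun x => c i * z x +
        runInf (fun p => (c (i + 1) * Z (i + 1) p + nest c Z (2 * j + 1) (i + 2) p)) x) := by
      rw [show 2 * (j + 1) + 1 = 2 * j + 1 + 1 + 1 by ring]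
      simp only [nest, e1]
    rw [hL, hR]
    exact key

/-- Peeling off the innermost letter, even case. -/
theorem nest_even {c : ℕ → ℝ} {Z Z' : ℕ → ℝ → ℝ} {z : ℝ → ℝ} (hz : Co z) (hZ : ∀ i, Co (Z i))
    (N : ℕ) (hc : ∀ i, i < N → 0 ≤ c i) (j : ℕ) (hN : 1 + 2 * j < N)
    (h0 : ∀ x, c 0 * Z' 0 x = c 0 * Z 0 x + c 1 * runInf z x)
    (h1 : ∀ k, Z (1 + 2 * k) = z)
    (h2 : ∀ k x, Z' (1 + 2 * k) x = z x - 2 * runInf z x)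
    (h3 : ∀ k x, c (1 + 2 * k + 1) * Z' (1 + 2 * k + 1) x =
      c (1 + 2 * k + 1) * Z (1 + 2 * k + 1) x + (c (1 + 2 * k + 2) + c (1 + 2 * k)) * runInf z x) :
    nest c Z' (2 * j + 1) 0 = nest c Z (2 * j + 2) 0 := by
  rw [nest, nest]
  congr 1
  funext x
  rw [h0, ← nest_odd hz hZ N hc j 1 hN h1 h2 h3]
  ring

theorem nest_terminal {c : ℕ → ℝ} {Z : ℕ → ℝ → ℝ} (hZ : ∀ i, Co (Z i)) {T : ℝ} (hT : 0 ≤ T)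
    (hcod : ∀ i u, 0 ≤ u → u ≤ T → Z i T ≤ Z i u) (n i : ℕ) (hc : ∀ j, j < i + n → 0 ≤ c j) :
    nest c Z n i T = ∑ j ∈ Finset.range n, c (i + j) * Z (i + j) T := by
  induction n generalizing i with
  | zero => simp [nest]
  | succ n ih =>
    have h1 := ih (i + 1) (fun j hj => hc j (by omega))
    have hco : Co (fun x => c i * Z i x + nest c Z n (i + 1) x) := by
      have g1 := hZ i
      have g2 := co_nest (c := c) hZ n (i + 1)
      unfold Co at *
      fun_prop
    have hanti : ∀ u, 0 ≤ u → u ≤ T → nest c Z n (i + 1) T ≤ nest c Z n (i + 1) u := by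
      intro u hu huT
      cases n with
      | zero => exact le_rfl
      | succ n =>
        apply runInf_anti _ hu huT
        have g1 := hZ (i + 1)
        have g2 := co_nest (c := c) hZ n (i + 1 + 1)
        unfold Co at *
        fun_prop
    have h2 : nest c Z (n + 1) i T = c i * Z i T + nest c Z n (i + 1) T := by
      apply le_antisymm
      · exact runInf_le hco hT le_rfl
      · refine le_runInf hT fun u hu huT => ?_
        exact add_le_add (mul_le_mul_of_nonneg_left (hcod i u hu huT) (hc i (by omega)))
          (hanti u hu huT)
    rw [h2, h1, Finset.sum_range_succ']
    simp only [add_zero]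
    rw [add_comm]
    congr 1
    apply Finset.sum_congr rfl
    intro j _
    rw [show i + (j + 1) = i + 1 + j by ring]

/-- Chebyshev-like weights. -/
noncomputable def cf : ℝ → ℝ → ℕ → ℝ
  | _, _, 0 => 1
  | a, _, 1 => a
  | a, b, n + 2 => a * cf b a (n + 1) - cf a b n

theorem cf_rec (a b : ℝ) (n : ℕ) : cf a b (n + 2) = a * cf b a (n + 1) - cf a b n := by
  rw [cf]

theorem cf_swap (a b : ℝ) (n : ℕ) :
    cf a b (2 * n) = cf b a (2 * n) ∧ b * cf a b (2 * n + 1) = a * cf b a (2 * n + 1) := by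
  induction n with
  | zero => simp [cf, mul_comm]
  | succ n ih =>
    have e : cf a b (2 * (n + 1)) = cf b a (2 * (n + 1)) := by
      rw [show 2 * (n + 1) = 2 * n + 2 by ring, cf, cf, ih.1, ih.2]
    refine ⟨e, ?_⟩
    rw [show 2 * (n + 1) + 1 = 2 * n + 1 + 2 by ring, cf_rec a b (2 * n + 1),
      cf_rec b a (2 * n + 1),
      show 2 * n + 1 + 1 = 2 * (n + 1) by ring, e, mul_sub, mul_sub, ih.2]
    ring

theorem cf_even (a b : ℝ) (n : ℕ) : cf a b (2 * n + 2) = b * cf a b (2 * n + 1) - cf a b (2 * n) := by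
  rw [cf, (cf_swap a b n).2]

theorem cf_odd (a b : ℝ) (n : ℕ) :
    cf a b (2 * n + 3) = a * cf a b (2 * n + 2) - cf a b (2 * n + 1) := by
  rw [cf, show 2 * n + 1 + 1 = 2 * (n + 1) by ring, (cf_swap a b (n + 1)).1]

theorem cf_closed {a b θ : ℝ} (hcos : Real.cos θ ≠ 0) (hab : a * b = 4 * Real.cos θ ^ 2) (n : ℕ) :
    Real.sin θ * cf a b (2 * n) = Real.sin ((2 * n + 1) * θ) ∧
    Real.sin θ * (2 * Real.cos θ) * cf a b (2 * n + 1) = a * Real.sin ((2 * n + 2) * θ) := by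
  have add2 : ∀ x : ℝ, Real.sin (x + 2 * θ) = 2 * Real.cos θ * Real.sin (x + θ) - Real.sin x := by
    intro x
    have h1 : x + 2 * θ = (x + θ) + θ := by ring
    have h2 : Real.sin x = Real.sin ((x + θ) - θ) := by congr 1; ring
    rw [h1, h2, Real.sin_add, Real.sin_sub]
    ring
  induction n with
  | zero =>
    constructor
    · simp [cf]
    · simp only [cf, Nat.cast_zero, mul_zero, zero_add, Real.sin_two_mul]; ring
  | succ n ih =>
    obtain ⟨i1, i2⟩ := ih
    have e1 : Real.sin θ * cf a b (2 * n + 2) = Real.sin ((2 * n + 3) * θ) := by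
      have h := add2 ((2 * n + 1) * θ)
      rw [show (2 * (n : ℝ) + 1) * θ + 2 * θ = (2 * n + 3) * θ by ring,
        show (2 * (n : ℝ) + 1) * θ + θ = (2 * n + 2) * θ by ring] at h
      rw [h, cf_even, mul_sub, i1]
      congr 1
      have h2 : (2 * Real.cos θ) ≠ 0 := by simpa using hcos
      apply mul_left_cancel₀ h2
      linear_combination b * i2 + Real.sin ((2 * n + 2) * θ) * hab
    have e2 : Real.sin θ * (2 * Real.cos θ) * cf a b (2 * n + 3) =
        a * Real.sin ((2 * n + 4) * θ) := by
      have h := add2 ((2 * n + 2) * θ)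
      rw [show (2 * (n : ℝ) + 2) * θ + 2 * θ = (2 * n + 4) * θ by ring,
        show (2 * (n : ℝ) + 2) * θ + θ = (2 * n + 3) * θ by ring] at h
      rw [h, cf_odd]
      linear_combination 2 * Real.cos θ * a * e1 - i2
    constructor
    · rw [show 2 * (n + 1) = 2 * n + 2 by ring, e1]; push_cast; congr 1; ring
    · rw [show 2 * (n + 1) + 1 = 2 * n + 3 by ring, e2]; push_cast; congr 2; ring

theorem cf_closed_inf {a b : ℝ} (hab : a * b = 4) (n : ℕ) :
    cf a b (2 * n) = 2 * n + 1 ∧ cf a b (2 * n + 1) = a * (n + 1) := by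
  induction n with
  | zero => simp [cf]
  | succ n ih =>
    have e1 : cf a b (2 * n + 2) = 2 * n + 3 := by
      rw [cf_even, ih.1, ih.2]; linear_combination ((n : ℝ) + 1) * hab
    constructor
    · rw [show 2 * (n + 1) = 2 * n + 2 by ring, e1]; push_cast; ring
    · rw [show 2 * (n + 1) + 1 = 2 * n + 3 by ring, cf_odd, e1, ih.2]; push_cast; ring

theorem cf_facts {a b : ℝ} {m : ℕ} (hm : m ≠ 1)
    (h : (m = 2 ∧ a = 0 ∧ b = 0) ∨
      (0 < a ∧ 0 < b ∧ a * b = 4 * Real.cos (Real.pi / (m : ℝ)) ^ 2)) :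
    (∀ k, (m = 0 ∨ k < m) → 0 ≤ cf a b k) ∧ (m ≠ 0 → cf a b (m - 1) = 0 ∧ a * b < 4) := by
  rcases h with ⟨rfl, rfl, rfl⟩ | ⟨ha, hb, hab⟩
  · constructor
    · intro k hk
      have : k = 0 ∨ k = 1 := by omega
      rcases this with rfl | rfl <;> simp [cf]
    · intro _; simp [cf]
  rcases Nat.eq_zero_or_pos m with rfl | hmpos
  · have hab' : a * b = 4 := by simpa using hab
    refine ⟨fun k _ => ?_, fun h => absurd rfl h⟩
    rcases Nat.even_or_odd' k with ⟨n, rfl | rfl⟩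
    · rw [(cf_closed_inf hab' n).1]; positivity
    · rw [(cf_closed_inf hab' n).2]; positivity
  have hm3 : 3 ≤ m := by
    by_contra hcon
    have : m = 2 := by omega
    subst this
    simp at hab
    rcases hab with h | h <;> linarith
  have hmR : (3 : ℝ) ≤ m := by exact_mod_cast hm3
  set θ := Real.pi / (m : ℝ) with hθ
  have hmθ : (m : ℝ) * θ = Real.pi := by rw [hθ]; field_simp
  have hpi := Real.pi_pos
  have hθ0 : 0 < θ := by positivity
  have hθ2 : θ < Real.pi / 2 := by
    rw [hθ]; apply div_lt_div_of_pos_left hpi (by norm_num) (by linarith)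
  have hcos : 0 < Real.cos θ := Real.cos_pos_of_mem_Ioo ⟨by linarith, hθ2⟩
  have hsin : 0 < Real.sin θ := Real.sin_pos_of_pos_of_lt_pi hθ0 (by linarith)
  constructor
  · intro k hk
    have hk : k + 1 ≤ m := by omega
    have hkR : (k : ℝ) + 1 ≤ m := by exact_mod_cast hk
    have hs : 0 ≤ Real.sin (((k : ℝ) + 1) * θ) := by
      apply Real.sin_nonneg_of_nonneg_of_le_pi (by positivity)
      rw [← hmθ]
      exact mul_le_mul_of_nonneg_right hkR hθ0.le
    rcases Nat.even_or_odd' k with ⟨n, rfl | rfl⟩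
    · have := (cf_closed hcos.ne' hab n).1
      push_cast at hs
      rw [← this] at hs
      exact nonneg_of_mul_nonneg_right hs hsin
    · have := (cf_closed hcos.ne' hab n).2
      push_cast at hs
      rw [show (2 * (n : ℝ) + 1 + 1) = 2 * n + 2 by ring] at hs
      have h2 := mul_nonneg ha.le hs
      rw [← this] at h2
      exact nonneg_of_mul_nonneg_right h2 (by positivity)
  · intro _
    constructor
    · obtain ⟨k, rfl⟩ : ∃ k, m = k + 1 := ⟨m - 1, by omega⟩
      have hs : Real.sin (((k : ℝ) + 1) * θ) = 0 := by
        have : ((k : ℝ) + 1) * θ = Real.pi := by rw [← hmθ]; push_cast; ring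
        rw [this, Real.sin_pi]
      simp only [Nat.add_sub_cancel]
      rcases Nat.even_or_odd' k with ⟨n, rfl | rfl⟩
      · have := (cf_closed hcos.ne' hab n).1
        push_cast at hs
        rw [hs] at this
        exact (mul_eq_zero.1 this).resolve_left hsin.ne'
      · have := (cf_closed hcos.ne' hab n).2
        push_cast at hs
        rw [show (2 * (n : ℝ) + 1 + 1) = 2 * n + 2 by ring] at hs
        rw [hs, mul_zero] at this
        exact (mul_eq_zero.1 this).resolve_left (by positivity)
    · rw [hab]
      nlinarith [Real.sin_sq_add_cos_sq θ]

/-- Alternating word of length `n` starting with `s`. -/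
def alt {B : Type*} : B → B → ℕ → List B
  | _, _, 0 => []
  | s, t, n + 1 => s :: alt t s n

theorem alt_concat {B : Type*} (s t : B) (n : ℕ) :
    alt s t (n + 1) = alt s t n ++ [if Even n then s else t] := by
  induction n generalizing s t with
  | zero => simp [alt]
  | succ n ih =>
    rw [alt, ih t s]
    simp only [alt, Nat.even_add_one, List.cons_append]
    congr 3
    by_cases h : Even n <;> simp [h]

theorem length_alt {B : Type*} (s t : B) (n : ℕ) : (alt s t n).length = n := by
  induction n generalizing s t with
  | zero => rfl
  | succ n ih => simp [alt, ih]

theorem alt_add {B : Type*} (s t : B) (m n : ℕ) : ∃ l, alt s t (m + n) = alt s t m ++ l ∧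
    l.length = n := by
  induction m generalizing s t with
  | zero => exact ⟨alt s t n, by simp [alt], length_alt _ _ _⟩
  | succ m ih =>
    obtain ⟨l, h, h'⟩ := ih t s
    refine ⟨l, ?_, h'⟩
    rw [show m + 1 + n = m + n + 1 by ring, alt, h]
    rfl

theorem reverse_alternatingWord {B : Type*} (s t : B) (n : ℕ) :
    (CoxeterSystem.alternatingWord t s n).reverse = alt s t n := by
  induction n generalizing s t with
  | zero => rfl
  | succ n ih => rw [CoxeterSystem.alternatingWord_succ, List.concat_eq_append, List.reverse_append, ih, alt]; rfl

section paths

set_option linter.unusedSectionVars false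

variable {V : Type*} [NormedAddCommGroup V] [NormedSpace ℝ V] [FiniteDimensional ℝ V]
variable {B : Type*} (α : B → V) (αv : B → Module.Dual ℝ V)

theorem pitmanWord_nil (ζ : ℝ → V) : pitmanWord α αv [] ζ = ζ := rfl

theorem pitmanWord_cons (s : B) (l : List B) (ζ : ℝ → V) :
    pitmanWord α αv (s :: l) ζ = pitman (α s) (αv s) (pitmanWord α αv l ζ) := rfl

theorem pitmanWord_append (l l' : List B) (ζ : ℝ → V) :
    pitmanWord α αv (l ++ l') ζ = pitmanWord α αv l (pitmanWord α αv l' ζ) := by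
  induction l with
  | nil => rfl
  | cons s l ih => rw [List.cons_append, pitmanWord_cons, pitmanWord_cons, ih]

theorem pitman_apply (s : B) (ζ : ℝ → V) (t : ℝ) :
    pitman (α s) (αv s) ζ t = ζ t - runInf (fun u => αv s (ζ u)) t • α s := rfl

/-- Continuity on `[0, ∞)` for paths. -/
abbrev CoV (ζ : ℝ → V) : Prop := ContinuousOn ζ (Ici 0)

theorem CoV.pair {ζ : ℝ → V} (hζ : CoV ζ) (φ : Module.Dual ℝ V) : Co (fun u => φ (ζ u)) :=
  (LinearMap.continuous_of_finiteDimensional φ).comp_continuousOn hζ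

theorem CoV.pitman {ζ : ℝ → V} (hζ : CoV ζ) (s : B) : CoV (pitman (α s) (αv s) ζ) :=
  ContinuousOn.sub hζ ((co_runInf (CoV.pair hζ (αv s))).smul continuousOn_const)

theorem CoV.word {ζ : ℝ → V} (hζ : CoV ζ) (l : List B) : CoV (pitmanWord α αv l ζ) := by
  induction l with
  | nil => exact hζ
  | cons s l ih => exact CoV.pitman α αv ih s

/-- Alternating sequence of coordinate functions. -/
noncomputable def Zs (ζ : ℝ → V) (s t : B) (i : ℕ) : ℝ → ℝ :=
  if Even i then fun u => αv s (ζ u) else fun u => αv t (ζ u)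

/-- The coefficient function of `α s` in the alternating Pitman transform. -/
noncomputable def Fs (ζ : ℝ → V) (s t : B) (k : ℕ) : ℝ → ℝ :=
  nest (cf (-αv s (α t)) (-αv t (α s))) (Zs αv ζ s t) k 0

theorem co_Zs {ζ : ℝ → V} (hζ : CoV ζ) (s t : B) (i : ℕ) : Co (Zs αv ζ s t i) := by
  unfold Zs
  split_ifs
  · exact CoV.pair hζ _
  · exact CoV.pair hζ _

theorem peel_odd {ζ : ℝ → V} (hζ : CoV ζ) {s t : B} (hs : αv s (α s) = 2) {N : ℕ}
    (hc : ∀ i, i < N → 0 ≤ cf (-αv s (α t)) (-αv t (α s)) i) (j : ℕ) (hj : 2 * j < N) (τ : ℝ) :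
    Fs α αv (pitman (α s) (αv s) ζ) s t (2 * j) τ + runInf (fun u => αv s (ζ u)) τ =
      Fs α αv ζ s t (2 * j + 1) τ := by
  have h := nest_odd (Z := Zs αv ζ s t) (Z' := Zs αv (pitman (α s) (αv s) ζ) s t)
    (CoV.pair hζ (αv s)) (co_Zs αv hζ s t) N hc j 0 (by omega)
    (fun k => by simp [Zs]) (fun k x => by simp [Zs, pitman_apply, hs]; ring)
    (fun k x => by
      have e := cf_even (-αv s (α t)) (-αv t (α s)) k
      have h1 : ¬ Even (2 * k + 1) := by simp
      simp only [zero_add, Zs, h1, if_false, pitman_apply, map_sub, map_smul, smul_eq_mul]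
      rw [e]
      ring) τ
  simpa [Fs, cf] using h

theorem peel_even {ζ : ℝ → V} (hζ : CoV ζ) {s t : B} (ht : αv t (α t) = 2) {N : ℕ}
    (hc : ∀ i, i < N → 0 ≤ cf (-αv s (α t)) (-αv t (α s)) i) (j : ℕ) (hj : 2 * j + 1 < N) :
    Fs α αv (pitman (α t) (αv t) ζ) s t (2 * j + 1) = Fs α αv ζ s t (2 * j + 2) := by
  have ho : ∀ k, ¬ Even (1 + 2 * k) := fun k => by rw [add_comm]; simp
  refine nest_even (Z := Zs αv ζ s t) (Z' := Zs αv (pitman (α t) (αv t) ζ) s t)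
    (CoV.pair hζ (αv t)) (co_Zs αv hζ s t) N hc j (by omega)
    (fun x => by simp [Zs, cf, pitman_apply]; ring)
    (fun k => by simp [Zs, ho])
    (fun k x => by simp [Zs, ho, pitman_apply, ht]; ring)
    (fun k x => ?_)
  have e := cf_odd (-αv s (α t)) (-αv t (α s)) k
  rw [show 1 + 2 * k + 2 = 2 * k + 3 by ring, show 1 + 2 * k + 1 = 2 * k + 2 by ring,
    show 1 + 2 * k = 2 * k + 1 by ring, e]
  have h1 : Even (2 * k + 2) := ⟨k + 1, by ring⟩
  simp only [Zs, h1, if_true, pitman_apply, map_sub, map_smul, smul_eq_mul]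
  ring

theorem alt_formula {s t : B} (hs : αv s (α s) = 2) (ht : αv t (α t) = 2) {N : ℕ}
    (hc : ∀ i, i < N → 0 ≤ cf (-αv s (α t)) (-αv t (α s)) i)
    (hc' : ∀ i, i < N → 0 ≤ cf (-αv t (α s)) (-αv s (α t)) i) (k : ℕ) (hk : k ≤ N)
    {ζ : ℝ → V} (hζ : CoV ζ) (τ : ℝ) :
    pitmanWord α αv (alt s t k) ζ τ =
      ζ τ - Fs α αv ζ s t k τ • α s - Fs α αv ζ t s (k - 1) τ • α t := by
  induction k generalizing ζ τ with
  | zero => simp [alt, pitmanWord_nil, Fs, nest]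
  | succ k ih =>
    rw [alt_concat, pitmanWord_append, pitmanWord_cons, pitmanWord_nil]
    rw [ih (by omega) (CoV.pitman α αv hζ _)]
    rcases Nat.even_or_odd' k with ⟨j, rfl | rfl⟩
    · have he : Even (2 * j) := by simp
      simp only [he, if_true, Nat.add_sub_cancel]
      rw [← peel_odd α αv hζ hs hc j (by omega) τ]
      have h2 : Fs α αv (pitman (α s) (αv s) ζ) t s (2 * j - 1) = Fs α αv ζ t s (2 * j) := by
        cases j with
        | zero => rfl
        | succ j => exact peel_even α αv hζ hs hc' j (by omega)
      rw [h2, pitman_apply]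
      module
    · have he : ¬ Even (2 * j + 1) := by simp
      simp only [he, if_false, Nat.add_sub_cancel]
      rw [← peel_odd α αv hζ ht hc' j (by omega) τ, ← peel_even α αv hζ ht hc j (by omega),
        pitman_apply]
      module

theorem braid_pitman {s t : B} (hs : αv s (α s) = 2) (ht : αv t (α t) = 2) {m : ℕ} (hm : m ≠ 0)
    (hc : ∀ i, i < m → 0 ≤ cf (-αv s (α t)) (-αv t (α s)) i)
    (hc' : ∀ i, i < m → 0 ≤ cf (-αv t (α s)) (-αv s (α t)) i)
    (h0 : cf (-αv s (α t)) (-αv t (α s)) (m - 1) = 0)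
    (h0' : cf (-αv t (α s)) (-αv s (α t)) (m - 1) = 0)
    {ζ : ℝ → V} (hζ : CoV ζ) :
    pitmanWord α αv (alt s t m) ζ = pitmanWord α αv (alt t s m) ζ := by
  funext τ
  rw [alt_formula α αv hs ht hc hc' m le_rfl hζ, alt_formula α αv ht hs hc' hc m le_rfl hζ]
  have e1 : Fs α αv ζ s t m = Fs α αv ζ s t (m - 1) := by
    obtain ⟨n, rfl⟩ : ∃ n, m = n + 1 := ⟨m - 1, by omega⟩
    exact nest_drop n 0 (by simpa using h0)
  have e2 : Fs α αv ζ t s m = Fs α αv ζ t s (m - 1) := by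
    obtain ⟨n, rfl⟩ : ∃ n, m = n + 1 := ⟨m - 1, by omega⟩
    exact nest_drop n 0 (by simpa using h0')
  rw [e1, e2]
  module

theorem codom_alt {s t : B} (hs : αv s (α s) = 2) (ht : αv t (α t) = 2) (k : ℕ)
    (hc : ∀ i, i < k + 1 → 0 ≤ cf (-αv s (α t)) (-αv t (α s)) i)
    (hc' : ∀ i, i < k + 1 → 0 ≤ cf (-αv t (α s)) (-αv s (α t)) i)
    {ζ : ℝ → V} (hζ : CoV ζ) {T : ℝ} (hT : 0 ≤ T)
    (hcs : ∀ u, 0 ≤ u → u ≤ T → αv s (ζ T) ≤ αv s (ζ u))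
    (hct : ∀ u, 0 ≤ u → u ≤ T → αv t (ζ T) ≤ αv t (ζ u))
    {u : ℝ} (hu : 0 ≤ u) (huT : u ≤ T) :
    αv s (pitmanWord α αv (alt t s k) ζ T) ≤ αv s (pitmanWord α αv (alt t s k) ζ u) := by
  set η := pitmanWord α αv (alt t s k) ζ with hη
  have hηT := alt_formula α αv ht hs hc' hc k (by omega) hζ T
  have hP := alt_formula α αv hs ht hc hc' (k + 1) le_rfl hζ T
  rw [alt, pitmanWord_cons, pitman_apply, ← hη] at hP
  rw [← hη] at hηT
  have hco : Co (fun u => αv s (η u)) := CoV.pair (CoV.word α αv hζ _) _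
  refine le_trans ?_ (runInf_le hco hu huT)
  have h1 := congrArg (αv s) hP
  rw [hηT] at h1
  simp only [map_sub, map_smul, smul_eq_mul, hs, Nat.add_sub_cancel] at h1
  have h2 : αv s (η T) = αv s (ζ T) - Fs α αv ζ t s k T * αv s (α t)
      - Fs α αv ζ s t (k - 1) T * 2 := by
    rw [hηT]; simp [hs]
  have hZ : ∀ (s t : B), (∀ u, 0 ≤ u → u ≤ T → αv s (ζ T) ≤ αv s (ζ u)) →
      (∀ u, 0 ≤ u → u ≤ T → αv t (ζ T) ≤ αv t (ζ u)) →
      ∀ i u, 0 ≤ u → u ≤ T → Zs αv ζ s t i T ≤ Zs αv ζ s t i u := by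
    intro s t h h' i u hu huT
    unfold Zs
    split_ifs
    · exact h u hu huT
    · exact h' u hu huT
  have e1 : ∀ n, n ≤ k + 1 → Fs α αv ζ s t n T = ∑ j ∈ Finset.range n,
      cf (-αv s (α t)) (-αv t (α s)) j * Zs αv ζ s t j T := by
    intro n hn
    have := nest_terminal (co_Zs αv hζ s t) hT (hZ s t hcs hct) n 0 (fun j hj => hc j (by omega))
    simpa [Fs] using this
  have e2 : ∀ n, n ≤ k + 1 → Fs α αv ζ t s n T = ∑ j ∈ Finset.range n,
      cf (-αv t (α s)) (-αv s (α t)) j * Zs αv ζ t s j T := by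
    intro n hn
    have := nest_terminal (co_Zs αv hζ t s) hT (hZ t s hct hcs) n 0 (fun j hj => hc' j (by omega))
    simpa [Fs] using this
  have hsw : ∀ j, Zs αv ζ t s j T = Zs αv ζ s t (j + 1) T ∧
      Zs αv ζ s t (j + 2) T = Zs αv ζ s t j T := by
    intro j
    unfold Zs
    by_cases h : Even j <;> simp [h, Nat.even_add_one]
  have key : ∀ n, Fs α αv ζ s t (k + 1) T = Fs α αv ζ s t (k + 1) T ∧
      ∑ j ∈ Finset.range (n + 1), cf (-αv s (α t)) (-αv t (α s)) j * Zs αv ζ s t j T +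
      ∑ j ∈ Finset.range (n - 1), cf (-αv s (α t)) (-αv t (α s)) j * Zs αv ζ s t j T =
      αv s (ζ T) + (-αv s (α t)) * ∑ j ∈ Finset.range n,
        cf (-αv t (α s)) (-αv s (α t)) j * Zs αv ζ t s j T := by
    intro n
    refine ⟨rfl, ?_⟩
    induction n with
    | zero => simp [cf, Zs]
    | succ n ih =>
      cases n with
      | zero => simp [cf, Zs, Finset.sum_range_succ]
      | succ n =>
        simp only [Nat.add_sub_cancel] at ih ⊢
        have q1 := Finset.sum_range_succ
          (fun j => cf (-αv s (α t)) (-αv t (α s)) j * Zs αv ζ s t j T) (n + 1 + 1)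
        have q2 := Finset.sum_range_succ
          (fun j => cf (-αv s (α t)) (-αv t (α s)) j * Zs αv ζ s t j T) n
        have q3 := Finset.sum_range_succ
          (fun j => cf (-αv t (α s)) (-αv s (α t)) j * Zs αv ζ t s j T) (n + 1)
        have q4 : cf (-αv s (α t)) (-αv t (α s)) (n + 1 + 1) * Zs αv ζ s t (n + 1 + 1) T +
            cf (-αv s (α t)) (-αv t (α s)) n * Zs αv ζ s t n T =
            -αv s (α t) * (cf (-αv t (α s)) (-αv s (α t)) (n + 1) * Zs αv ζ t s (n + 1) T) := by
          have g1 : Zs αv ζ s t (n + 1 + 1) T = Zs αv ζ s t n T := (hsw n).2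
          have g2 : cf (-αv s (α t)) (-αv t (α s)) (n + 1 + 1) = _ :=
            cf_rec (-αv s (α t)) (-αv t (α s)) n
          rw [(hsw (n + 1)).1, g1, g2]
          ring
        rw [q1, q2, q3]
        linear_combination ih + q4
  have key' := (key k).2
  rw [← e1 (k + 1) le_rfl, ← e1 (k - 1) (by omega), ← e2 k (by omega)] at key'
  linarith

end paths

section coxeter

set_option linter.unusedSectionVars false

variable {B W : Type*} [Group W] {M : CoxeterMatrix B} (cs : CoxeterSystem M W)

theorem wordProd_alt_braid (s t : B) :
    cs.wordProd (alt s t (M s t)) = cs.wordProd (alt t s (M s t)) := by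
  have h := cs.wordProd_braidWord_eq t s
  unfold CoxeterSystem.braidWord at h
  rw [← reverse_alternatingWord, ← reverse_alternatingWord, cs.wordProd_reverse,
    cs.wordProd_reverse, M.symmetric s t, h, M.symmetric t s]

theorem strip_step {s t : B} {w v : W} {k : ℕ} (hd : cs.IsLeftDescent w s)
    (h : cs.simple s * w = cs.wordProd (alt s t k) * v ∨
      cs.simple s * w = cs.wordProd (alt t s k) * v)
    (hl : cs.length (cs.simple s * w) = k + cs.length v) :
    w = cs.wordProd (alt s t (k + 1)) * v ∧ cs.length w = k + 1 + cs.length v := by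
  have hd' := cs.isLeftDescent_iff.1 hd
  have hlen : cs.length w = k + 1 + cs.length v := by omega
  have main : cs.simple s * w = cs.wordProd (alt t s k) * v →
      w = cs.wordProd (alt s t (k + 1)) * v := by
    intro h
    rw [alt, cs.wordProd_cons, mul_assoc, ← h, cs.simple_mul_simple_cancel_left]
  refine ⟨?_, hlen⟩
  rcases h with h | h
  · cases k with
    | zero => exact main h
    | succ k =>
      exfalso
      rw [alt, cs.wordProd_cons, mul_assoc] at h
      have h2 := mul_left_cancel h
      have h3 := cs.length_mul_le (cs.wordProd (alt t s k)) v
      have h4 := cs.length_wordProd_le (alt t s k)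
      rw [length_alt] at h4
      rw [← h2] at h3
      omega
  · exact main h

theorem strip (s t : B) (w : W) : ∃ (k : ℕ) (v : W),
    (w = cs.wordProd (alt s t k) * v ∨ w = cs.wordProd (alt t s k) * v) ∧
    cs.length w = k + cs.length v ∧ ¬ cs.IsLeftDescent v s ∧ ¬ cs.IsLeftDescent v t := by
  induction hn : cs.length w using Nat.strong_induction_on generalizing w with
  | _ n ih =>
    by_cases hs : cs.IsLeftDescent w s
    · obtain ⟨k, v, h1, h2, h3⟩ := ih _ (hn ▸ hs) (cs.simple s * w) rfl
      obtain ⟨g1, g2⟩ := strip_step cs hs h1 h2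
      exact ⟨k + 1, v, Or.inl g1, hn ▸ g2, h3⟩
    by_cases ht : cs.IsLeftDescent w t
    · obtain ⟨k, v, h1, h2, h3⟩ := ih _ (hn ▸ ht) (cs.simple t * w) rfl
      obtain ⟨g1, g2⟩ := strip_step cs ht h1.symm h2
      exact ⟨k + 1, v, Or.inr g1, hn ▸ g2, h3⟩
    exact ⟨0, w, by simp [alt], by omega, hs, ht⟩

theorem descent_of_alt {s t : B} {w v : W} {k : ℕ} (h : w = cs.wordProd (alt s t (k + 1)) * v)
    (hl : cs.length w = k + 1 + cs.length v) : cs.IsLeftDescent w s := by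
  have h2 : cs.simple s * w = cs.wordProd (alt t s k) * v := by
    rw [h, alt, cs.wordProd_cons, mul_assoc, cs.simple_mul_simple_cancel_left]
  have h3 := cs.length_mul_le (cs.wordProd (alt t s k)) v
  have h4 := cs.length_wordProd_le (alt t s k)
  rw [length_alt] at h4
  unfold CoxeterSystem.IsLeftDescent
  rw [h2]
  omega

/-- Long alternating prefixes can be rewritten. -/
theorem long_alt {s t : B} {w v : W} {k : ℕ} (hk : M s t ≤ k)
    (h : w = cs.wordProd (alt s t k) * v) (hl : cs.length w = k + cs.length v) :
    ∃ v', w = cs.wordProd (alt s t (M s t)) * v' ∧ w = cs.wordProd (alt t s (M s t)) * v' ∧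
      cs.length w = M s t + cs.length v' := by
  obtain ⟨n, rfl⟩ := Nat.exists_eq_add_of_le hk
  obtain ⟨l, hl1, hl2⟩ := alt_add s t (M s t) n
  have e : w = cs.wordProd (alt s t (M s t)) * (cs.wordProd l * v) := by
    rw [h, hl1, cs.wordProd_append, mul_assoc]
  refine ⟨cs.wordProd l * v, e, ?_, ?_⟩
  · rw [← wordProd_alt_braid]; exact e
  · have h1 := cs.length_mul_le (cs.wordProd l) v
    have h2 := cs.length_wordProd_le l
    have h3 := cs.length_mul_le (cs.wordProd (alt s t (M s t))) (cs.wordProd l * v)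
    have h4 := cs.length_wordProd_le (alt s t (M s t))
    rw [length_alt] at h4
    rw [← e] at h3
    omega

/-- Decomposition when `s` is not a left descent and `t` is. -/
theorem strip_one {s t : B} {w : W} (hs : ¬ cs.IsLeftDescent w s) (ht : cs.IsLeftDescent w t) :
    ∃ (k : ℕ) (v : W), w = cs.wordProd (alt t s k) * v ∧ cs.length w = k + cs.length v ∧
      cs.length v < cs.length w ∧ (M s t = 0 ∨ k < M s t) ∧
      ¬ cs.IsLeftDescent v s ∧ ¬ cs.IsLeftDescent v t := by
  obtain ⟨k, v, h1, h2, h3, h4⟩ := strip cs s t w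
  have hne : s ≠ t := fun h => hs (h ▸ ht)
  cases k with
  | zero =>
    have : w = v := by simpa [alt] using h1
    exact absurd (this ▸ ht) h4
  | succ k =>
    have h1' : w = cs.wordProd (alt t s (k + 1)) * v := by
      rcases h1 with h1 | h1
      · exact absurd (descent_of_alt cs h1 h2) hs
      · exact h1
    refine ⟨k + 1, v, h1', h2, by omega, ?_, h3, h4⟩
    by_contra hcon
    push Not at hcon
    rw [M.symmetric] at hcon
    obtain ⟨v', _, g2, g3⟩ := long_alt cs hcon.2 h1' h2
    obtain ⟨m, hm⟩ : ∃ m, M t s = m + 1 := ⟨M t s - 1, by omega⟩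
    rw [hm] at g2 g3
    exact hs (descent_of_alt cs g2 g3)

section rep

variable [Fintype B] [DecidableEq B] {V : Type*} [AddCommGroup V] [Module ℝ V]
variable (α : B → V) (αv : B → Module.Dual ℝ V)

/-- The map from formal combinations of coroots to functionals. -/
noncomputable def phi : (B → ℝ) →ₗ[ℝ] Module.Dual ℝ V := Fintype.linearCombination ℝ αv

/-- Formal simple coroot. -/
def ee (s : B) : B → ℝ := Pi.single s 1

theorem phi_ee (s : B) : phi αv (ee s) = αv s := by
  simp [phi, ee]

/-- Reflection on formal combinations of coroots. -/
noncomputable def sig (s : B) : Module.End ℝ (B → ℝ) :=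
  LinearMap.id - ((LinearMap.applyₗ (α s)).comp (phi αv)).smulRight (ee s)

theorem sig_apply (s : B) (x : B → ℝ) : sig α αv s x = x - (phi αv x (α s)) • ee s := by
  simp [sig]

theorem sig_ee (s t : B) : sig α αv s (ee t) = ee t - αv t (α s) • ee s := by
  rw [sig_apply, phi_ee]

theorem phi_sig (s : B) (x : B → ℝ) (v : V) :
    phi αv (sig α αv s x) v = phi αv x (v - αv s v • α s) := by
  simp only [sig_apply, map_sub, map_smul, phi_ee, LinearMap.sub_apply, LinearMap.smul_apply,
    smul_eq_mul]
  ring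

variable (ρ : W →* (V ≃ₗ[ℝ] V)) (hρs : ∀ s v, ρ (cs.simple s) v = v - αv s v • α s)
variable (hpair : ∀ s, αv s (α s) = 2)

include hρs in
theorem phi_pow (s t : B) (n : ℕ) (x : B → ℝ) (v : V) :
    phi αv (((sig α αv s * sig α αv t) ^ n) x) v =
      phi αv x (ρ ((cs.simple t * cs.simple s) ^ n) v) := by
  induction n generalizing x with
  | zero => simp
  | succ n ih =>
    rw [pow_succ, Module.End.mul_apply, ih, Module.End.mul_apply, phi_sig, phi_sig, pow_succ',
      map_mul, map_mul]
    simp only [LinearEquiv.mul_apply]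
    rw [hρs s, hρs t]

theorem pow_span (s t : B) (n : ℕ) (x : B → ℝ) :
    ∃ p q : ℝ, ((sig α αv s * sig α αv t) ^ n) x = x + p • ee s + q • ee t := by
  induction n generalizing x with
  | zero => exact ⟨0, 0, by simp⟩
  | succ n ih =>
    obtain ⟨p, q, h⟩ := ih ((sig α αv s * sig α αv t) x)
    rw [pow_succ, Module.End.mul_apply, h, Module.End.mul_apply, sig_apply, sig_apply α αv t]
    exact ⟨p - phi αv (x - phi αv x (α t) • ee t) (α s), q - phi αv x (α t), by module⟩

include hρs hpair in
theorem liftable (hlt : ∀ s t, s ≠ t → M s t ≠ 0 → αv s (α t) * αv t (α s) < 4) :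
    M.IsLiftable (sig α αv) := by
  intro s t
  by_cases hst : s = t
  · subst hst
    rw [M.diagonal, pow_one]
    ext1 x
    ext1
    simp only [LinearMap.comp_apply, Module.End.mul_apply, Module.End.one_apply]
    rw [sig_apply α αv s (sig α αv s _), phi_sig, hpair, sig_apply]
    congr 1
    rw [show α s - (2 : ℝ) • α s = - α s by module, map_neg]
    module
  by_cases hm : M s t = 0
  · rw [hm, pow_zero]
  refine LinearMap.ext fun x => ?_
  obtain ⟨p, q, h⟩ := pow_span α αv s t (M s t) x
  have h1 : ∀ v, phi αv (x + p • ee s + q • ee t) v = phi αv x v := by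
    intro v
    rw [← h, phi_pow cs α αv ρ hρs, M.symmetric, cs.simple_mul_simple_pow, map_one]
    rfl
  have h2 : ∀ v, p * αv s v + q * αv t v = 0 := by
    intro v
    have := h1 v
    simp only [map_add, map_smul, phi_ee, LinearMap.add_apply, LinearMap.smul_apply,
      smul_eq_mul] at this
    linarith
  have a1 := h2 (α s)
  have a2 := h2 (α t)
  rw [hpair] at a1 a2
  have hl := hlt s t hst hm
  have hp : p = 0 := by
    have : p * (4 - αv s (α t) * αv t (α s)) = 0 := by linear_combination 2 * a1 - αv t (α s) * a2
    exact (mul_eq_zero.1 this).resolve_right (by linarith)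
  have hq : q = 0 := by
    rw [hp] at a2
    linarith
  rw [h, hp, hq]
  simp

variable (R : W →* Module.End ℝ (B → ℝ)) (hR : ∀ s, R (cs.simple s) = sig α αv s)

/-- Index of the letter in position `k` of the alternating word. -/
def zz (s t : B) (k : ℕ) : B := if Even k then s else t

/-- Shifted weights. -/
noncomputable def cfm (a b : ℝ) : ℕ → ℝ
  | 0 => 0
  | k + 1 => cf a b k

include hR hpair in
theorem alt_root (k : ℕ) : ∀ (s t : B),
    R (cs.wordProd (alt t s k))⁻¹ (ee s) =
      cf (-αv s (α t)) (-αv t (α s)) k • ee (zz s t k) +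
      cfm (-αv s (α t)) (-αv t (α s)) k • ee (zz s t (k + 1)) := by
  have hcons : ∀ (s t : B) (k : ℕ) (x : B → ℝ), R (cs.wordProd (alt s t (k + 1)))⁻¹ x =
      R (cs.wordProd (alt t s k))⁻¹ (sig α αv s x) := by
    intro s t k x
    rw [alt, cs.wordProd_cons, mul_inv_rev, cs.inv_simple, map_mul, hR, Module.End.mul_apply]
  have hneg : ∀ s, sig α αv s (ee s) = - ee s := by
    intro s
    rw [sig_ee, hpair]; module
  induction k using Nat.strong_induction_on with
  | _ k ih =>
    intro s t
    match k, ih with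
    | 0, _ => simp [alt, zz, cf, cfm]
    | 1, _ =>
      rw [hcons, sig_ee]
      simp [alt, zz, cf, cfm]
      module
    | k + 2, ih =>
      have i1 := ih (k + 1) (by omega) t s
      have i2 := ih k (by omega) s t
      rw [hcons, sig_ee, map_sub, map_smul, i1, hcons, hneg, map_neg, i2, cf_rec]
      have z1 : zz t s (k + 1) = zz s t k := by
        unfold zz; by_cases h : Even k <;> simp [h, Nat.even_add_one]
      have z2 : zz t s (k + 1 + 1) = zz s t (k + 1) := by
        unfold zz; by_cases h : Even k <;> simp [h, Nat.even_add_one]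
      have z3 : zz s t (k + 2) = zz s t k := by
        unfold zz; by_cases h : Even k <;> simp [h, Nat.even_add]
      have z4 : zz s t (k + 2 + 1) = zz s t (k + 1) := by
        unfold zz; by_cases h : Even k <;> simp [h, Nat.even_add, Nat.even_add_one]
      rw [z1, z2, z3, z4]
      cases k with
      | zero => simp only [cfm, cf]; module
      | succ k =>
        simp only [cfm]
        have e : cf (-αv s (α t)) (-αv t (α s)) (k + 1 + 1) = _ :=
          cf_rec (-αv s (α t)) (-αv t (α s)) k
        rw [e]
        module

include hR hpair in
theorem alt_root_nonneg {s t : B} {k : ℕ} {v : W}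
    (hc : ∀ i, i ≤ k → 0 ≤ cf (-αv s (α t)) (-αv t (α s)) i)
    (h1 : 0 ≤ R v⁻¹ (ee s)) (h2 : 0 ≤ R v⁻¹ (ee t)) :
    0 ≤ R (cs.wordProd (alt t s k) * v)⁻¹ (ee s) := by
  rw [mul_inv_rev, map_mul, Module.End.mul_apply, alt_root cs α αv hpair R hR, map_add, map_smul,
    map_smul]
  have hz : ∀ j, 0 ≤ R v⁻¹ (ee (zz s t j)) := by
    intro j
    unfold zz
    split_ifs
    · exact h1
    · exact h2
  have hm : 0 ≤ cfm (-αv s (α t)) (-αv t (α s)) k := by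
    cases k with
    | zero => exact le_rfl
    | succ k => exact hc k (by omega)
  exact add_nonneg (smul_nonneg (hc k le_rfl) (hz _)) (smul_nonneg hm (hz _))

variable (hcf : ∀ s t, s ≠ t → ∀ k, (M s t = 0 ∨ k < M s t) → 0 ≤ cf (-αv s (α t)) (-αv t (α s)) k)

include hR hpair hcf in
theorem root_pos (w : W) (s : B) (hs : ¬ cs.IsLeftDescent w s) : 0 ≤ R w⁻¹ (ee s) := by
  induction hn : cs.length w using Nat.strong_induction_on generalizing w s with
  | _ n ih =>
    by_cases hw : w = 1
    · subst hw
      simp [ee]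
    obtain ⟨t, ht⟩ := cs.exists_leftDescent_of_ne_one hw
    have hne : s ≠ t := fun h => hs (h ▸ ht)
    obtain ⟨k, v, h1, h2, h3, h4, h5, h6⟩ := strip_one cs hs ht
    rw [h1]
    exact alt_root_nonneg cs α αv hpair R hR (fun i hi => hcf s t hne i (by omega))
      (ih _ (hn ▸ h3) v s h5 rfl) (ih _ (hn ▸ h3) v t h6 rfl)

include hR hpair hcf in
/-- Two distinct left descents give a long dihedral prefix. -/
theorem two_descents {w : W} {s t : B} (hne : s ≠ t) (hs : cs.IsLeftDescent w s)
    (ht : cs.IsLeftDescent w t) : M s t ≠ 0 ∧ ∃ v, w = cs.wordProd (alt s t (M s t)) * v ∧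
      w = cs.wordProd (alt t s (M s t)) * v ∧ cs.length w = M s t + cs.length v := by
  have aux : ∀ (s t : B) (k : ℕ) (v : W), s ≠ t → cs.IsLeftDescent w s →
      w = cs.wordProd (alt t s k) * v → ¬ cs.IsLeftDescent v s → ¬ cs.IsLeftDescent v t →
      M s t ≠ 0 ∧ M s t ≤ k := by
    intro s t k v hne hs hw h1 h2
    by_contra hcon
    have hk : M s t = 0 ∨ k < M s t := by omega
    have hp : 0 ≤ R w⁻¹ (ee s) := by
      rw [hw]
      exact alt_root_nonneg cs α αv hpair R hR (fun i hi => hcf s t hne i (by omega))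
        (root_pos cs α αv hpair R hR hcf v s h1) (root_pos cs α αv hpair R hR hcf v t h2)
    have hq := root_pos cs α αv hpair R hR hcf (cs.simple s * w) s
      (cs.isLeftDescent_iff_not_isLeftDescent_mul.1 hs)
    rw [mul_inv_rev, cs.inv_simple, map_mul, Module.End.mul_apply, hR, sig_ee, hpair,
      show ee s - (2 : ℝ) • ee s = - ee s by module, map_neg] at hq
    have hz : R w⁻¹ (ee s) = 0 := le_antisymm (neg_nonneg.1 hq) hp
    have hz2 : R w (R w⁻¹ (ee s)) = ee s := by
      rw [← Module.End.mul_apply, ← map_mul, mul_inv_cancel, map_one]; rfl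
    rw [hz, map_zero] at hz2
    have := congrFun hz2 s
    simp [ee] at this
  obtain ⟨k, v, h1, h2, h3, h4⟩ := strip cs s t w
  rcases h1 with h1 | h1
  · obtain ⟨g1, g2⟩ := aux t s k v hne.symm ht h1 h4 h3
    rw [M.symmetric] at g1 g2
    exact ⟨g1, long_alt cs g2 h1 h2⟩
  · obtain ⟨g1, g2⟩ := aux s t k v hne hs h1 h3 h4
    rw [M.symmetric] at g2
    obtain ⟨v', e1, e2, e3⟩ := long_alt cs g2 h1 h2
    rw [M.symmetric t s] at e1 e2 e3
    exact ⟨g1, v', e2, e1, e3⟩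

end rep

end coxeter

section Final

theorem word_unique {B W : Type*} [Group W] {M : CoxeterMatrix B} (cs : CoxeterSystem M W)
    {V : Type*} [NormedAddCommGroup V] [NormedSpace ℝ V] [FiniteDimensional ℝ V]
    (α : B → V) (αv : B → Module.Dual ℝ V)
    (htd : ∀ (w : W) (s t : B), s ≠ t → cs.IsLeftDescent w s → cs.IsLeftDescent w t →
      M s t ≠ 0 ∧ ∃ v, w = cs.wordProd (alt s t (M s t)) * v ∧
      w = cs.wordProd (alt t s (M s t)) * v ∧ cs.length w = M s t + cs.length v)
    (hbr : ∀ s t : B, s ≠ t → M s t ≠ 0 → ∀ ζ : ℝ → V, CoV ζ →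
      pitmanWord α αv (alt s t (M s t)) ζ = pitmanWord α αv (alt t s (M s t)) ζ)
    {ζ : ℝ → V} (hζ : CoV ζ) (n : ℕ) :
    ∀ l l' : List B, l.length = n → l'.length = n → cs.wordProd l = cs.wordProd l' →
      cs.length (cs.wordProd l) = n → pitmanWord α αv l ζ = pitmanWord α αv l' ζ := by
  induction n with
  | zero =>
    intro l l' h1 h2 _ _
    rw [List.length_eq_zero_iff.mp h1, List.length_eq_zero_iff.mp h2]
  | succ n ih =>
    intro l l' h1 h2 h3 h4
    obtain ⟨s, l1, rfl⟩ := List.exists_cons_of_length_eq_add_one h1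
    obtain ⟨t, l2, rfl⟩ := List.exists_cons_of_length_eq_add_one h2
    have h1' : l1.length = n := by simpa using h1
    have h2' : l2.length = n := by simpa using h2
    -- a tail of a reduced word of length n + 1 has length n
    have htail : ∀ (r : B) (m : List B), m.length = n →
        cs.length (cs.wordProd (r :: m)) = n + 1 → cs.length (cs.wordProd m) = n := by
      intro r m hm hr
      have a1 := cs.length_wordProd_le m
      rw [cs.wordProd_cons] at hr
      have a2 := cs.length_mul_le (cs.simple r) (cs.wordProd m)
      rw [cs.length_simple] at a2
      omega
    have hld : ∀ (r : B) (m : List B), m.length = n →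
        cs.length (cs.wordProd (r :: m)) = n + 1 →
        cs.IsLeftDescent (cs.wordProd (r :: m)) r := by
      intro r m hm hr
      have := htail r m hm hr
      unfold CoxeterSystem.IsLeftDescent
      rw [hr, cs.wordProd_cons, cs.simple_mul_simple_cancel_left]
      omega
    have h5 : cs.length (cs.wordProd (t :: l2)) = n + 1 := h3 ▸ h4
    -- same first letter
    have same : ∀ (r : B) (m m' : List B), m.length = n → m'.length = n →
        cs.wordProd (r :: m) = cs.wordProd (r :: m') →
        cs.length (cs.wordProd (r :: m)) = n + 1 →
        pitmanWord α αv (r :: m) ζ = pitmanWord α αv (r :: m') ζ := by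
      intro r m m' hm hm' he hr
      rw [pitmanWord_cons, pitmanWord_cons]
      rw [ih m m' hm hm' _ (htail r m hm hr)]
      rw [cs.wordProd_cons, cs.wordProd_cons] at he
      exact mul_left_cancel he
    by_cases hst : s = t
    · subst hst
      exact same s l1 l2 h1' h2' h3 h4
    obtain ⟨hm0, v, e1, e2, e3⟩ := htd _ s t hst (hld s l1 h1' h4) (h3 ▸ hld t l2 h2' h5)
    obtain ⟨lv, hlv, rfl⟩ := cs.exists_isReduced v
    have hlen : lv.length = cs.length (cs.wordProd lv) := hlv.symm
    obtain ⟨m, hm⟩ : ∃ m, M s t = m + 1 := ⟨M s t - 1, by omega⟩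
    have f1 : pitmanWord α αv (s :: l1) ζ = pitmanWord α αv (alt s t (M s t) ++ lv) ζ := by
      rw [hm, alt, List.cons_append]
      apply same s l1 _ h1'
      · rw [List.length_append, length_alt]; omega
      · rw [← List.cons_append, ← alt, Nat.succ_eq_add_one, ← hm, cs.wordProd_append, ← e1]
      · exact h4
    have f2 : pitmanWord α αv (t :: l2) ζ = pitmanWord α αv (alt t s (M s t) ++ lv) ζ := by
      rw [hm, alt, List.cons_append]
      apply same t l2 _ h2'
      · rw [List.length_append, length_alt]; omega
      · rw [← List.cons_append, ← alt, Nat.succ_eq_add_one, ← hm, cs.wordProd_append, ← e2, h3]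
      · exact h5
    rw [f1, f2, pitmanWord_append, pitmanWord_append]
    exact hbr s t hst hm0 _ (CoV.word α αv hζ lv)

theorem codom_word {B W : Type*} [Group W] {M : CoxeterMatrix B} (cs : CoxeterSystem M W)
    {V : Type*} [NormedAddCommGroup V] [NormedSpace ℝ V] [FiniteDimensional ℝ V]
    (α : B → V) (αv : B → Module.Dual ℝ V) (hpair : ∀ s, αv s (α s) = 2)
    (hcf : ∀ s t, s ≠ t → ∀ k, (M s t = 0 ∨ k < M s t) →
      0 ≤ cf (-αv s (α t)) (-αv t (α s)) k)
    {ζ : ℝ → V} (hζ : CoV ζ)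
    (huniq : ∀ l l' : List B, cs.IsReduced l → cs.IsReduced l' →
      cs.wordProd l = cs.wordProd l' → pitmanWord α αv l ζ = pitmanWord α αv l' ζ)
    {T : ℝ} (hT : 0 ≤ T) (hcod : ∀ s u, 0 ≤ u → u ≤ T → αv s (ζ T) ≤ αv s (ζ u)) (n : ℕ) :
    ∀ (l : List B) (s : B), cs.IsReduced l → cs.length (cs.wordProd l) = n →
      ¬ cs.IsLeftDescent (cs.wordProd l) s → ∀ u, 0 ≤ u → u ≤ T →
      αv s (pitmanWord α αv l ζ T) ≤ αv s (pitmanWord α αv l ζ u) := by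
  induction n using Nat.strong_induction_on with
  | _ n ih =>
    intro l s hl hn hs u hu huT
    by_cases hw : cs.wordProd l = 1
    · have : l = [] := by
        have h := hl
        unfold CoxeterSystem.IsReduced at h
        rw [hw, cs.length_one] at h
        exact List.length_eq_zero_iff.mp h.symm
      subst this
      exact hcod s u hu huT
    obtain ⟨t, ht⟩ := cs.exists_leftDescent_of_ne_one hw
    have hne : s ≠ t := fun h => hs (h ▸ ht)
    obtain ⟨k, v, h1, h2, h3, h4, h5, h6⟩ := strip_one cs hs ht
    obtain ⟨lv, hlv, rfl⟩ := cs.exists_isReduced v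
    have hred : cs.IsReduced (alt t s k ++ lv) := by
      unfold CoxeterSystem.IsReduced at hlv ⊢
      rw [cs.wordProd_append, ← h1, h2, List.length_append, length_alt, hlv]
    rw [huniq l (alt t s k ++ lv) hl hred (by rw [cs.wordProd_append, ← h1]), pitmanWord_append]
    have hM : M t s = M s t := M.symmetric t s
    exact codom_alt α αv (hpair s) (hpair t) k
      (fun i hi => hcf s t hne i (by omega)) (fun i hi => hcf t s hne.symm i (by omega))
      (CoV.word α αv hζ lv) hT
      (ih _ (by omega) lv s hlv rfl h5) (ih _ (by omega) lv t hlv rfl h6) hu huT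

theorem word_congr {B : Type*} {V : Type*} [NormedAddCommGroup V] [NormedSpace ℝ V]
    [FiniteDimensional ℝ V] (α : B → V) (αv : B → Module.Dual ℝ V) {T : ℝ} {ζ η : ℝ → V}
    (h : ∀ u, 0 ≤ u → u ≤ T → ζ u = η u) (l : List B) :
    ∀ u, 0 ≤ u → u ≤ T → pitmanWord α αv l ζ u = pitmanWord α αv l η u := by
  induction l with
  | nil => exact h
  | cons s l ih =>
    intro u hu huT
    rw [pitmanWord_cons, pitmanWord_cons, pitman_apply, pitman_apply, ih u hu huT]
    congr 2
    exact runInf_congr fun x hx hxu => by rw [ih x hx (hxu.trans huT)]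

end Final

end PitmanAux

/-- Lemma 4.3 of Biane–Bougerol–O'Connell: if `π` is a codominant path, `w ∈ W` and
`s ∈ S` satisfies `ℓ(σ_s w) > ℓ(w)`, then `P_w π` is `α_s`-codominant.  Here `P_w` is
computed along any reduced word `l` for `w`; a path `η` is codominant if
`α_{s'}∨(η t) ≥ α_{s'}∨(η T)` for all `t ∈ [0,T]` and all `s'`. -/
theorem pitmanWord_codominant
    {V : Type*} [NormedAddCommGroup V] [NormedSpace ℝ V] [FiniteDimensional ℝ V]
    (T : ℝ) (hT : 0 < T)
    {B : Type*} [Fintype B] {W : Type*} [Group W]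
    (M : CoxeterMatrix B) (cs : CoxeterSystem M W)
    (α : B → V) (αv : B → Module.Dual ℝ V)
    (hpair : ∀ s, αv s (α s) = 2)
    (ρ : W →* (V ≃ₗ[ℝ] V)) (hρinj : Function.Injective ρ)
    (hρs : ∀ s v, ρ (cs.simple s) v = v - αv s v • α s)
    (hM : ∀ s s' : B, s ≠ s' →
      (M s s' = 2 ∧ αv s (α s') = 0 ∧ αv s' (α s) = 0) ∨
      (αv s (α s') < 0 ∧ αv s' (α s) < 0 ∧
        αv s (α s') * αv s' (α s) = 4 * Real.cos (Real.pi / (M s s' : ℝ)) ^ 2))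
    (π : ℝ → V) (hcont : ContinuousOn π (Set.Icc 0 T)) (h0 : π 0 = 0)
    (hcodom : ∀ s : B, ∀ t ∈ Set.Icc 0 T, αv s (π T) ≤ αv s (π t))
    (w : W) (l : List B) (hl : cs.wordProd l = w) (hlred : cs.IsReduced l)
    (s : B) (hs : cs.length w < cs.length (cs.simple s * w)) :
    ∀ t ∈ Set.Icc 0 T,
      αv s (pitmanWord α αv l π T) ≤ αv s (pitmanWord α αv l π t) := by

  classical
  have hfacts : ∀ s t : B, s ≠ t → _ := fun s t hne =>
    PitmanAux.cf_facts (a := -αv s (α t)) (b := -αv t (α s)) (m := M s t)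
      (M.off_diagonal s t hne) (by
        rcases hM s t hne with ⟨h1, h2, h3⟩ | ⟨h1, h2, h3⟩
        · left; simp [h1, h2, h3]
        · right
          refine ⟨by linarith, by linarith, ?_⟩
          rw [neg_mul_neg, h3])
  have hcf : ∀ s t, s ≠ t → ∀ k, (M s t = 0 ∨ k < M s t) →
      0 ≤ PitmanAux.cf (-αv s (α t)) (-αv t (α s)) k := fun s t hne => (hfacts s t hne).1
  have hlt : ∀ s t, s ≠ t → M s t ≠ 0 → αv s (α t) * αv t (α s) < 4 := fun s t hne h => by
    have := ((hfacts s t hne).2 h).2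
    rwa [neg_mul_neg] at this
  have hbr : ∀ s t : B, s ≠ t → M s t ≠ 0 → ∀ ζ : ℝ → V, PitmanAux.CoV ζ →
      pitmanWord α αv (PitmanAux.alt s t (M s t)) ζ =
        pitmanWord α αv (PitmanAux.alt t s (M s t)) ζ := by
    intro s t hne hm ζ hζ
    have hsym : M t s = M s t := M.symmetric t s
    refine PitmanAux.braid_pitman α αv (hpair s) (hpair t) hm
      (fun i hi => hcf s t hne i (Or.inr hi)) (fun i hi => hcf t s hne.symm i (by omega))
      ((hfacts s t hne).2 hm).1 ?_ hζ
    have := ((hfacts t s hne.symm).2 (by omega)).1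
    rwa [hsym] at this
  have htd : ∀ (w : W) (s t : B), s ≠ t → cs.IsLeftDescent w s → cs.IsLeftDescent w t →
      M s t ≠ 0 ∧ ∃ v, w = cs.wordProd (PitmanAux.alt s t (M s t)) * v ∧
      w = cs.wordProd (PitmanAux.alt t s (M s t)) * v ∧ cs.length w = M s t + cs.length v :=
    fun w s t hne h1 h2 => PitmanAux.two_descents cs α αv hpair
      (cs.lift ⟨PitmanAux.sig α αv, PitmanAux.liftable cs α αv ρ hρs hpair hlt⟩)
      (fun s => cs.lift_apply_simple _ s) hcf hne h1 h2
  set ζ : ℝ → V := fun t => π (max 0 (min T t)) with hζdef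
  have hζ : PitmanAux.CoV ζ := by
    have : Continuous ζ := hcont.comp_continuous (by fun_prop)
      (fun t => ⟨le_max_left _ _, max_le hT.le (min_le_left _ _)⟩)
    exact this.continuousOn
  have heq : ∀ u, 0 ≤ u → u ≤ T → π u = ζ u := by
    intro u hu huT
    simp only [hζdef]
    rw [min_eq_right huT, max_eq_right hu]
  intro t ht
  rw [PitmanAux.word_congr α αv heq l T hT.le le_rfl,
    PitmanAux.word_congr α αv heq l t ht.1 ht.2]
  refine PitmanAux.codom_word cs α αv hpair hcf hζ ?_ hT.le ?_ _ l s hlred rfl ?_ t ht.1 ht.2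
  · intro l1 l2 h1 h2 h12
    refine PitmanAux.word_unique cs α αv htd hbr hζ l1.length l1 l2 rfl ?_ h12 h1
    rw [← h2, ← h12, h1]
  · intro r u hu huT
    rw [← heq T hT.le le_rfl, ← heq u hu huT]
    exact hcodom r u ⟨hu, huT⟩
  · rw [hl]
    unfold CoxeterSystem.IsLeftDescent
    omega
end

section
/- Endpoint duality: in the Coxeter setting below, assume W is finite with longest element w_0. Then for every continuous path π : [0,T] → V with π(0) = 0, one has (E_{w_0} π)(T) = w_0( (P_{w_0} π)(T) ). -/
/-- The composite co-Pitman transform `E_{α_{s₁}} ∘ ⋯ ∘ E_{α_{s_l}}` along a word. -/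
noncomputable def copitmanWord {V : Type*} [AddCommGroup V] [Module ℝ V] {B : Type*}
    (T : ℝ) (α : B → V) (αv : B → Module.Dual ℝ V) (l : List B) : (ℝ → V) → (ℝ → V) :=
  l.foldr (fun s f => copitman T (α s) (αv s) ∘ f) id


namespace PitmanDual

open Set

/-! ### Chebyshev-like sequences -/

/-- Coefficients of the alternating chains. -/
noncomputable def tau (p q : ℝ) : ℕ → ℝ
  | 0 => 1
  | 1 => p
  | (k + 2) => (if Even (k + 1) then p else q) * tau p q (k + 1) - tau p q k

/-- Positivity of the coefficients up to rank `m`. -/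
def PosSeq (p q : ℝ) (m : ℕ) : Prop :=
  (∀ k, (m = 0 ∨ k + 1 < m) → 0 < tau p q k) ∧ (2 ≤ m → tau p q (m - 1) = 0)

theorem PosSeq.nonneg {p q : ℝ} {m : ℕ} (h : PosSeq p q m) (k : ℕ) (hk : m = 0 ∨ k < m)
    (hm : m ≠ 1) : 0 ≤ tau p q k := by
  by_cases h' : m = 0 ∨ k + 1 < m
  · exact (h.1 k h').le
  · have : k = m - 1 := by omega
    rw [this, h.2 (by omega)]

theorem tau_eq (p q c : ℝ) (hc : c ≠ 0) (hpq : p * q = 4 * c ^ 2) (u : ℕ → ℝ)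
    (u0 : u 0 = 1) (u1 : u 1 = 2 * c) (u2 : ∀ k, u (k + 2) = 2 * c * u (k + 1) - u k) (k : ℕ) :
    tau p q k = (if Even k then 1 else p / (2 * c)) * u k := by
  induction k using Nat.twoStepInduction with
  | zero => simp [tau, u0]
  | one => simp [tau, u1]; field_simp
  | more k ih1 ih2 =>
    rw [tau, ih1, ih2, u2]
    by_cases hk : Even k
    · have h1 : ¬ Even (k + 1) := by simpa [Nat.even_add_one] using hk
      have h2 : Even (k + 2) := by simpa [Nat.even_add_one] using hk
      simp only [hk, h1, h2, if_true, if_false]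
      have : q * (p / (2 * c)) = 2 * c := by field_simp; linarith
      rw [← mul_assoc, this]; ring
    · have h1 : Even (k + 1) := by simpa [Nat.even_add_one] using hk
      have h2 : ¬ Even (k + 2) := by simpa [Nat.even_add_one] using hk
      simp only [hk, h1, h2, if_true, if_false]
      field_simp

theorem posSeq_of (p q : ℝ) (m : ℕ) (hm1 : m ≠ 1)
    (h : (m = 2 ∧ p = 0 ∧ q = 0) ∨
      (0 < p ∧ 0 < q ∧ p * q = 4 * Real.cos (Real.pi / (m : ℝ)) ^ 2)) : PosSeq p q m := by
  rcases h with ⟨rfl, rfl, rfl⟩ | ⟨hp, hq, hpq⟩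
  · refine ⟨fun k hk => ?_, fun _ => by simp [tau]⟩
    have : k = 0 := by omega
    subst this; simp [tau]
  by_cases hm0 : m = 0
  · subst hm0
    simp only [CharP.cast_eq_zero, div_zero, Real.cos_zero] at hpq
    refine ⟨fun k _ => ?_, by omega⟩
    rw [tau_eq p q 1 one_ne_zero hpq (fun k => k + 1) (by simp) (by norm_num)
      (by intro k; push_cast; ring)]
    have : (0 : ℝ) < k + 1 := by positivity
    split_ifs <;> positivity
  have hm2 : m ≠ 2 := by
    rintro rfl
    simp at hpq
    rcases hpq with h | h <;> linarith
  have hm3 : 3 ≤ m := by omega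
  have hm3' : (3 : ℝ) ≤ m := by exact_mod_cast hm3
  set θ := Real.pi / (m : ℝ) with hθ
  have hπ := Real.pi_pos
  have hmθ : (m : ℝ) * θ = Real.pi := by rw [hθ]; field_simp
  have hθ0 : 0 < θ := by positivity
  have hθ2 : θ < Real.pi / 2 := by nlinarith
  have hc : 0 < Real.cos θ := Real.cos_pos_of_mem_Ioo ⟨by linarith, hθ2⟩
  have hs : 0 < Real.sin θ := Real.sin_pos_of_pos_of_lt_pi hθ0 (by linarith)
  have key := tau_eq p q (Real.cos θ) hc.ne' hpq (fun k => Real.sin ((k + 1) * θ) / Real.sin θ)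
    (by simp [hs.ne']) (by
      have : ((1 : ℕ) + 1 : ℝ) * θ = 2 * θ := by norm_num
      simp only [this, Real.sin_two_mul]; field_simp) (by
      intro k
      have h1 : ((k + 2 : ℕ) + 1 : ℝ) * θ = ((k + 1 : ℕ) + 1 : ℝ) * θ + θ := by push_cast; ring
      have h2 : ((k : ℕ) + 1 : ℝ) * θ = ((k + 1 : ℕ) + 1 : ℝ) * θ - θ := by push_cast; ring
      simp only [h1, h2, Real.sin_add, Real.sin_sub]
      field_simp
      ring)
  refine ⟨fun k hk => ?_, fun _ => ?_⟩
  · rw [key]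
    have hk' : k + 1 < m := by omega
    have hk'' : (k : ℝ) + 1 < m := by exact_mod_cast hk'
    have : 0 < Real.sin ((k + 1) * θ) :=
      Real.sin_pos_of_pos_of_lt_pi (by positivity) (by rw [← hmθ]; gcongr)
    split_ifs <;> positivity
  · rw [key]
    have : ((m - 1 : ℕ) + 1 : ℝ) * θ = Real.pi := by
      rw [Nat.cast_sub (by omega)]; simpa using hmθ
    simp [this]

/-! ### Alternating words -/

/-- Alternating letters `a, b, a, b, …`. -/
def cc {B : Type*} (a b : B) (k : ℕ) : B := if Even k then a else b

/-- The alternating word `a b a …` of length `k`. -/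
def alt {B : Type*} (a b : B) : ℕ → List B
  | 0 => []
  | (k + 1) => a :: alt b a k

theorem cc_succ {B : Type*} (a b : B) (k : ℕ) : cc a b (k + 1) = cc b a k := by
  unfold cc; by_cases h : Even k <;> simp [h, Nat.even_add_one]

theorem cc_two {B : Type*} (a b : B) (k : ℕ) : cc a b (k + 2) = cc a b k := by
  rw [cc_succ, cc_succ]

theorem alt_succ' {B : Type*} (a b : B) (k : ℕ) : alt a b (k + 1) = alt a b k ++ [cc a b k] := by
  induction k generalizing a b with
  | zero => simp [alt, cc]
  | succ k ih => rw [alt, ih, cc_succ]; simp [alt]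

theorem length_alt {B : Type*} (a b : B) (k : ℕ) : (alt a b k).length = k := by
  induction k generalizing a b with
  | zero => simp [alt]
  | succ k ih => simp [alt, ih]

theorem alt_add {B : Type*} (a b : B) (k j : ℕ) :
    ∃ l : List B, l.length = j ∧ alt a b (k + j) = alt a b k ++ l := by
  induction j with
  | zero => exact ⟨[], by simp⟩
  | succ j ih =>
    obtain ⟨l, hl, h⟩ := ih
    exact ⟨l ++ [cc a b (k + j)], by simp [hl], by rw [← add_assoc, alt_succ', h]; simp⟩

section Coxeter
variable {B : Type*} {W : Type*} [Group W] {M : CoxeterMatrix B} (cs : CoxeterSystem M W)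

theorem wordProd_alt_comm (a b : B) :
    cs.wordProd (alt a b (M a b)) = cs.wordProd (alt b a (M a b)) := by
  have key : ∀ (m : ℕ) (i i' : B), CoxeterSystem.alternatingWord i i' m = (alt i' i m).reverse := by
    intro m
    induction m with
    | zero => intro i i'; simp [alt, CoxeterSystem.alternatingWord]
    | succ m ih =>
      intro i i'
      rw [CoxeterSystem.alternatingWord_succ, ih]; simp [alt]
  have h := cs.wordProd_braidWord_eq a b
  rw [CoxeterSystem.braidWord, CoxeterSystem.braidWord, key, key, M.symmetric b a] at h
  simp only [CoxeterSystem.wordProd_reverse, inv_inj] at h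
  exact h.symm

theorem factor (w : W) (a b : B) (hd : cs.IsLeftDescent w a) :
    ∃ k u, 1 ≤ k ∧ w = cs.wordProd (alt a b k) * u ∧ cs.length w = k + cs.length u ∧
      ¬ cs.IsLeftDescent u a ∧ ¬ cs.IsLeftDescent u b := by
  by_contra hcon
  have all : ∀ j, ∃ u, w = cs.wordProd (alt a b (j + 1)) * u ∧
      cs.length w = (j + 1) + cs.length u := by
    intro j
    induction j with
    | zero =>
      refine ⟨cs.simple a * w, by simp [alt], ?_⟩
      have := cs.isLeftDescent_iff.1 hd
      omega
    | succ j ih =>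
      obtain ⟨u, hu, hl⟩ := ih
      by_cases h1 : cs.IsLeftDescent u (cc a b (j + 1))
      · refine ⟨cs.simple (cc a b (j + 1)) * u, ?_, ?_⟩
        · rw [alt_succ', cs.wordProd_append, hu]; simp [mul_assoc]
        · have := cs.isLeftDescent_iff.1 h1
          omega
      · have h2 : ¬ cs.IsLeftDescent u (cc a b j) := by
          intro h2
          have h3 := cs.isLeftDescent_iff.1 h2
          have h4 : w = cs.wordProd (alt a b j) * (cs.simple (cc a b j) * u) := by
            rw [hu, alt_succ', cs.wordProd_append]; simp [mul_assoc]
          have h5 := cs.length_mul_le (cs.wordProd (alt a b j)) (cs.simple (cc a b j) * u)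
          have h6 := cs.length_wordProd_le (alt a b j)
          rw [length_alt] at h6
          rw [← h4] at h5
          omega
        exfalso
        refine hcon ⟨j + 1, u, by omega, hu, hl, ?_⟩
        rw [cc_succ] at h1
        unfold cc at h1 h2
        split_ifs at h1 h2
        · exact ⟨h2, h1⟩
        · exact ⟨h1, h2⟩
  obtain ⟨u, -, h⟩ := all (cs.length w)
  omega

/-- Splitting off a full dihedral word. -/
theorem split_alt (w u : W) (a b : B) (k : ℕ) (hm : M a b ≤ k)
    (hw : w = cs.wordProd (alt a b k) * u) (hl : cs.length w = k + cs.length u) :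
    ∃ u', w = cs.wordProd (alt a b (M a b)) * u' ∧ cs.length w = M a b + cs.length u' := by
  obtain ⟨j, rfl⟩ := Nat.exists_eq_add_of_le hm
  obtain ⟨l, hlen, hl'⟩ := alt_add a b (M a b) j
  refine ⟨cs.wordProd l * u, by rw [hw, hl', cs.wordProd_append, mul_assoc], ?_⟩
  have h1 := cs.length_mul_le (cs.wordProd l) u
  have h2 := cs.length_wordProd_le l
  have h3 := cs.length_mul_le (cs.wordProd (alt a b (M a b))) (cs.wordProd l * u)
  have h4 := cs.length_wordProd_le (alt a b (M a b))
  rw [length_alt] at h4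
  rw [← mul_assoc, ← cs.wordProd_append, ← hl', ← hw] at h3
  omega

/-- A reflection representation with good Cartan pairings. -/
structure RefRep {V : Type*} [AddCommGroup V] [Module ℝ V] (α : B → V)
    (αv : B → Module.Dual ℝ V) (ρ : W →* Module.End ℝ V) : Prop where
  pair : ∀ s, αv s (α s) = 2
  act : ∀ s v, ρ (cs.simple s) v = v - αv s v • α s
  pos : ∀ s s', s ≠ s' → PosSeq (-αv s (α s')) (-αv s' (α s)) (M s s')

variable {V : Type*} [AddCommGroup V] [Module ℝ V] {α : B → V}
    {αv : B → Module.Dual ℝ V} {ρ : W →* Module.End ℝ V}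

theorem RefRep.neg (h : RefRep cs α αv ρ) (s : B) (w : W) (v : V) :
    αv s (ρ (cs.simple s * w) v) = - αv s (ρ w v) := by
  rw [map_mul, Module.End.mul_apply, h.act, map_sub, map_smul, h.pair, smul_eq_mul]; ring

theorem pair_cc (h : ∀ s, αv s (α s) = 2) (a b : B) (k : ℕ) :
    αv (cc a b k) (α (cc a b k)) = 2 ∧
    -αv (cc a b k) (α (cc a b (k + 1))) =
      if Even k then -αv a (α b) else -αv b (α a) := by
  refine ⟨h _, ?_⟩
  rw [cc_succ]; unfold cc; split_ifs <;> rfl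

theorem RefRep.alt_formula (h : RefRep cs α αv ρ) (a b : B) (k : ℕ) (v : V) :
    αv a (ρ (cs.wordProd (alt b a (k + 1))) v) =
      tau (-αv a (α b)) (-αv b (α a)) (k + 1) * αv (cc a b (k + 1)) v +
      tau (-αv a (α b)) (-αv b (α a)) k * αv (cc a b k) v := by
  induction k generalizing v with
  | zero => simp [alt, cc, tau, h.act]; ring
  | succ k ih =>
    rw [alt_succ', cs.wordProd_append, map_mul, Module.End.mul_apply, ih,
      cs.wordProd_singleton, h.act, ← cc_succ a b (k + 1), cc_two]
    obtain ⟨h1, -⟩ := pair_cc h.pair a b k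
    obtain ⟨-, h2⟩ := pair_cc h.pair a b (k + 1)
    rw [cc_two] at h2
    simp only [map_sub, map_smul, smul_eq_mul, h1, tau, ← h2]
    ring

theorem RefRep.positive (h : RefRep cs α αv ρ) (n : ℕ) : ∀ w, cs.length w = n → ∀ s,
    ¬ cs.IsLeftDescent w s →
    (∀ v, (∀ t, 0 ≤ αv t v) → 0 ≤ αv s (ρ w v)) ∧
    (∀ v, (∀ t, 0 < αv t v) → 0 < αv s (ρ w v)) := by
  induction n using Nat.strong_induction_on with
  | _ n IH =>
  intro w hn s hs
  by_cases hw1 : w = 1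
  · subst hw1
    exact ⟨fun v hv => by simpa using hv s, fun v hv => by simpa using hv s⟩
  obtain ⟨t, ht⟩ := cs.exists_leftDescent_of_ne_one hw1
  have hst : s ≠ t := by rintro rfl; exact hs ht
  obtain ⟨k, u, hk, hw, hl, hut, hus⟩ := factor cs w t s ht
  have hkm : M s t = 0 ∨ k < M s t := by
    by_contra hcon
    push Not at hcon
    rw [M.symmetric s t] at hcon
    obtain ⟨u', hu', hl'⟩ := split_alt cs w u t s k hcon.2 hw hl
    apply hs
    rw [wordProd_alt_comm] at hu'
    obtain ⟨m, hm⟩ := Nat.exists_eq_succ_of_ne_zero hcon.1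
    rw [hm] at hu' hl'
    have h1 : cs.simple s * w = cs.wordProd (alt t s m) * u' := by
      rw [hu', alt, cs.wordProd_cons]; simp [mul_assoc]
    have h2 := cs.length_mul_le (cs.wordProd (alt t s m)) u'
    have h3 := cs.length_wordProd_le (alt t s m)
    rw [length_alt] at h3
    unfold CoxeterSystem.IsLeftDescent
    rw [h1]
    omega
  obtain ⟨j, rfl⟩ := Nat.exists_eq_add_of_le' hk
  have hM1 : M s t ≠ 1 := M.off_diagonal s t hst
  have p1 := (h.pos s t hst).1 j (by omega)
  have p2 := (h.pos s t hst).nonneg (j + 1) (by omega) hM1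
  obtain ⟨a1, a2⟩ := IH _ (by omega) u rfl t hut
  obtain ⟨b1, b2⟩ := IH _ (by omega) u rfl s hus
  have key : ∀ v, αv s (ρ w v) = _ := fun v => by
    rw [hw, map_mul, Module.End.mul_apply, h.alt_formula cs s t j]
  have c1 : ∀ i v, (∀ t, 0 ≤ αv t v) → 0 ≤ αv (cc s t i) (ρ u v) := fun i v hv => by
    unfold cc; split_ifs
    exacts [b1 v hv, a1 v hv]
  have c2 : ∀ i v, (∀ t, 0 < αv t v) → 0 < αv (cc s t i) (ρ u v) := fun i v hv => by
    unfold cc; split_ifs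
    exacts [b2 v hv, a2 v hv]
  constructor
  · intro v hv
    rw [key]
    have := c1 j v hv
    have := c1 (j + 1) v hv
    positivity
  · intro v hv
    rw [key]
    have := c2 j v hv
    have := c2 (j + 1) v hv
    positivity

theorem RefRep.two_descents (h : RefRep cs α αv ρ) (v : V) (hv : ∀ t, 0 < αv t v) (w : W)
    (a b : B) (hab : a ≠ b) (ha : cs.IsLeftDescent w a) (hb : cs.IsLeftDescent w b) :
    M a b ≠ 0 ∧ ∃ u', w = cs.wordProd (alt a b (M a b)) * u' ∧
      cs.length w = M a b + cs.length u' := by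
  obtain ⟨k, u, hk, hw, hl, hua, hub⟩ := factor cs w a b ha
  by_cases hkm : M b a = 0 ∨ k < M b a
  · exfalso
    obtain ⟨j, rfl⟩ := Nat.exists_eq_add_of_le' hk
    have hM1 : M b a ≠ 1 := M.off_diagonal b a hab.symm
    have p1 := (h.pos b a hab.symm).1 j (by omega)
    have p2 := (h.pos b a hab.symm).nonneg (j + 1) (by omega) hM1
    obtain ⟨-, a2⟩ := h.positive cs _ u rfl a hua
    obtain ⟨-, b2⟩ := h.positive cs _ u rfl b hub
    have c2 : ∀ i, 0 < αv (cc b a i) (ρ u v) := fun i => by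
      unfold cc; split_ifs
      exacts [b2 v hv, a2 v hv]
    have key : 0 < αv b (ρ w v) := by
      rw [hw, map_mul, Module.End.mul_apply, h.alt_formula cs b a j]
      have := c2 j
      have := c2 (j + 1)
      positivity
    have h1 := (h.positive cs _ (cs.simple b * w) rfl b
      (cs.isLeftDescent_iff_not_isLeftDescent_mul.1 hb)).2 v hv
    rw [h.neg] at h1
    linarith
  · push Not at hkm
    rw [M.symmetric b a] at hkm
    exact ⟨hkm.1, split_alt cs w u a b k hkm.2 hw hl⟩

/-- Matsumoto's theorem, in the form needed here. -/
theorem matsumoto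
    (h2 : ∀ (w : W) (a b : B), a ≠ b → cs.IsLeftDescent w a → cs.IsLeftDescent w b →
      M a b ≠ 0 ∧ ∃ u', w = cs.wordProd (alt a b (M a b)) * u' ∧
      cs.length w = M a b + cs.length u')
    (R : List B → List B → Prop) (hrefl : ∀ l, R l l)
    (htrans : ∀ l m n, R l m → R m n → R l n)
    (hcons : ∀ s l m, R l m → R (s :: l) (s :: m))
    (hbraid : ∀ a b l, a ≠ b → M a b ≠ 0 → R (alt a b (M a b) ++ l) (alt b a (M a b) ++ l))
    (n : ℕ) : ∀ l m : List B, l.length = n → cs.wordProd l = cs.wordProd m →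
      cs.IsReduced l → cs.IsReduced m → R l m := by
  induction n with
  | zero =>
    intro l m hl hp hrl hrm
    have : m.length = 0 := by rw [← hrm.eq, ← hp, hrl.eq, hl]
    rw [List.length_eq_zero_iff] at hl this
    subst hl; subst this; exact hrefl _
  | succ n IH =>
    intro l m hl hp hrl hrm
    have hm : m.length = n + 1 := by rw [← hrm.eq, ← hp, hrl.eq, hl]
    -- the key cancellation
    have key : ∀ (s : B) (l m : List B), l.length = n → cs.wordProd (s :: l) = cs.wordProd (s :: m) →
        cs.IsReduced (s :: l) → cs.IsReduced (s :: m) → R (s :: l) (s :: m) := by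
      intro s l m hl hp hrl hrm
      apply hcons
      refine IH l m hl ?_ (by simpa using hrl.drop 1) (by simpa using hrm.drop 1)
      rw [cs.wordProd_cons, cs.wordProd_cons] at hp
      exact mul_left_cancel hp
    match l, m, hl, hm, hp, hrl, hrm with
    | a :: l, b :: m, hl, hm, hp, hrl, hrm =>
    simp only [List.length_cons, Nat.add_right_cancel_iff] at hl hm
    by_cases hab : a = b
    · subst hab; exact key a l m hl hp hrl hrm
    have desc : ∀ (s : B) (l : List B), cs.IsReduced (s :: l) →
        cs.IsLeftDescent (cs.wordProd (s :: l)) s := by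
      intro s l hr
      unfold CoxeterSystem.IsLeftDescent
      rw [hr.eq, cs.wordProd_cons, cs.simple_mul_simple_cancel_left]
      have := cs.length_wordProd_le l
      simp only [List.length_cons]; omega
    obtain ⟨hM0, u, hu, hul⟩ := h2 (cs.wordProd (a :: l)) a b hab (desc a l hrl)
      (by rw [hp]; exact desc b m hrm)
    obtain ⟨r, hr, rfl⟩ := cs.exists_isReduced u
    have hlen : M a b + r.length = n + 1 := by
      rw [hrl.eq, hr.eq] at hul; simpa [hl] using hul.symm
    have e1 : cs.wordProd (alt a b (M a b) ++ r) = cs.wordProd (a :: l) := by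
      rw [hu, cs.wordProd_append]
    have e2 : cs.wordProd (alt b a (M a b) ++ r) = cs.wordProd (b :: m) := by
      rw [← hp, hu, cs.wordProd_append, wordProd_alt_comm]
    have r1 : cs.IsReduced (alt a b (M a b) ++ r) := by
      unfold CoxeterSystem.IsReduced
      rw [e1, hrl.eq]; simp [length_alt, hlen, hl]
    have r2 : cs.IsReduced (alt b a (M a b) ++ r) := by
      unfold CoxeterSystem.IsReduced
      rw [e2, hrm.eq]; simp [length_alt, hlen, hm]
    have hb := hbraid a b r hab hM0
    obtain ⟨k, hk⟩ := Nat.exists_eq_succ_of_ne_zero hM0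
    rw [hk] at e1 e2 r1 r2 hb hlen
    simp only [alt, List.cons_append] at e1 e2 r1 r2 hb
    refine htrans _ _ _ (key a l _ hl e1.symm hrl r1) (htrans _ _ _ hb (key b _ m ?_ e2 r2 hrm))
    simp [length_alt]; omega

/-- In the orbit of a point there is at most one dominant point. -/
theorem RefRep.dominant_unique (h : RefRep cs α αv ρ) (n : ℕ) : ∀ (u : W), cs.length u = n →
    ∀ v : V, (∀ t, 0 ≤ αv t v) → (∀ t, 0 ≤ αv t (ρ u v)) → ρ u v = v := by
  induction n with
  | zero => intro u hu v _ _; rw [cs.length_eq_zero_iff.1 hu]; simp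
  | succ n IH =>
    intro u hu v hv huv
    have h1 : u ≠ 1 := by rintro rfl; simp at hu
    obtain ⟨s, hs⟩ := cs.exists_leftDescent_of_ne_one h1
    have p := (h.positive cs _ (cs.simple s * u) rfl s
      (cs.isLeftDescent_iff_not_isLeftDescent_mul.1 hs)).1 v hv
    have q := huv s
    rw [h.neg] at p
    have e : αv s (ρ u v) = 0 := by linarith
    have e2 : ρ (cs.simple s * u) v = ρ u v := by
      rw [map_mul, Module.End.mul_apply, h.act, e]; simp
    have := IH (cs.simple s * u) (by have := cs.isLeftDescent_iff.1 hs; omega) v hv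
      (by rw [e2]; exact huv)
    rw [← e2, this]

end Coxeter

/-! ### A representation with a strictly dominant point -/

theorem reflection_pow_eq_one {V : Type*} [AddCommGroup V] [Module ℝ V] (x y : V)
    (f g : Module.Dual ℝ V) (hf : f x = 2) (hg : g y = 2) (m : ℕ) (hm : 2 ≤ m)
    (h : (m = 2 ∧ f y = 0 ∧ g x = 0) ∨ (f y < 0 ∧ g x < 0 ∧
      f y * g x = 4 * Real.cos (Real.pi / (m : ℝ)) ^ 2)) :
    (Module.reflection hf * Module.reflection hg) ^ m = 1 := by
  ext z
  rcases h with ⟨rfl, h1, h2⟩ | ⟨h1, h2, h3⟩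
  · simp only [pow_two, LinearEquiv.mul_apply, Module.reflection_apply, map_sub, map_smul, hf, hg,
      h1, h2, LinearEquiv.coe_one, id]
    module
  have hm2 : m ≠ 2 := by
    rintro rfl
    simp at h3
    rcases h3 with h | h <;> linarith
  have hm3 : 3 ≤ m := by omega
  have hm3' : (3 : ℝ) ≤ m := by exact_mod_cast hm3
  set θ := Real.pi / (m : ℝ) with hθ
  have hπ := Real.pi_pos
  have hmθ : (m : ℝ) * θ = Real.pi := by rw [hθ]; field_simp
  have hθ0 : 0 < θ := by positivity
  have hs : Real.sin (2 * θ) ≠ 0 := (Real.sin_pos_of_pos_of_lt_pi (by linarith) (by nlinarith)).ne'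
  have ht : 2 * Real.cos (2 * θ) = f y * g x - 2 := by rw [h3, Real.cos_two_mul]; ring
  rw [Module.reflection_mul_reflection_pow_apply hf hg m z _ ht]
  have S := fun n : ℤ => Polynomial.Chebyshev.S_two_mul_real_cos (2 * θ) n
  rcases Nat.even_or_odd' m with ⟨c, rfl | rfl⟩
  · have e1 : ((2 * c : ℕ) - 2 : ℤ) / 2 = c - 1 := by omega
    have e2 : ((2 * c : ℕ) - 1 : ℤ) / 2 = c - 1 := by omega
    have z1 : (Polynomial.Chebyshev.S ℝ ((c : ℤ) - 1)).eval (2 * Real.cos (2 * θ)) = 0 := by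
      have := S (c - 1)
      have e : (((c : ℤ) - 1 : ℤ) + 1 : ℝ) * (2 * θ) = Real.pi := by
        push_cast at hmθ ⊢; linarith
      rw [e, Real.sin_pi] at this
      exact (mul_eq_zero.1 this).resolve_right hs
    rw [e1, e2, z1]; simp
  · have e1 : ((2 * c + 1 : ℕ) - 2 : ℤ) / 2 = c - 1 := by omega
    have e2 : ((2 * c + 1 : ℕ) - 1 : ℤ) / 2 = c := by omega
    have e3 : ((2 * c + 1 : ℕ) - 3 : ℤ) / 2 = c - 1 := by omega
    have e4 : ((2 * c + 1 : ℕ) : ℤ) / 2 = c := by omega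
    have z1 : (Polynomial.Chebyshev.S ℝ (c : ℤ)).eval (2 * Real.cos (2 * θ)) +
        (Polynomial.Chebyshev.S ℝ ((c : ℤ) - 1)).eval (2 * Real.cos (2 * θ)) = 0 := by
      have s1 := S (c - 1)
      have s2 := S c
      have e : (((c : ℤ) - 1 : ℤ) + 1 : ℝ) * (2 * θ) = Real.pi - θ := by
        push_cast at hmθ ⊢; linarith
      have e' : (((c : ℤ) : ℝ) + 1) * (2 * θ) = θ + Real.pi := by
        push_cast at hmθ ⊢; linarith
      rw [e, Real.sin_pi_sub] at s1
      rw [e', Real.sin_add_pi] at s2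
      refine (mul_eq_zero.1 (?_ : _ * Real.sin (2 * θ) = 0)).resolve_right hs
      rw [add_mul, s1, s2]; ring
    rw [e1, e2, e3, e4, z1]; simp

theorem exists_strict {B : Type*} {W : Type*} [Group W] {M : CoxeterMatrix B}
    (cs : CoxeterSystem M W) {V : Type*} [AddCommGroup V] [Module ℝ V]
    (α : B → V) (αv : B → Module.Dual ℝ V)
    (hpair : ∀ s, αv s (α s) = 2)
    (hM : ∀ s s' : B, s ≠ s' →
      (M s s' = 2 ∧ αv s (α s') = 0 ∧ αv s' (α s) = 0) ∨
      (αv s (α s') < 0 ∧ αv s' (α s) < 0 ∧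
        αv s (α s') * αv s' (α s) = 4 * Real.cos (Real.pi / (M s s' : ℝ)) ^ 2))
    (hpos : ∀ s s', s ≠ s' → PosSeq (-αv s (α s')) (-αv s' (α s)) (M s s')) :
    ∃ (α' : B → V × (B → ℝ)) (αv' : B → Module.Dual ℝ (V × (B → ℝ)))
      (ρ' : W →* Module.End ℝ (V × (B → ℝ))) (v : V × (B → ℝ)),
      RefRep cs α' αv' ρ' ∧ ∀ t, 0 < αv' t v := by
  let α' : B → V × (B → ℝ) := fun s => (α s, 0)
  let αv' : B → Module.Dual ℝ (V × (B → ℝ)) := fun s =>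
    (αv s).comp (LinearMap.fst ℝ V (B → ℝ)) + (LinearMap.proj s).comp (LinearMap.snd ℝ V (B → ℝ))
  have hp : ∀ s t, αv' s (α' t) = αv s (α t) := fun s t => by simp [αv', α']
  have hp2 : ∀ s, αv' s (α' s) = 2 := fun s => by rw [hp, hpair]
  let f : B → ((V × (B → ℝ)) ≃ₗ[ℝ] (V × (B → ℝ))) := fun s => Module.reflection (hp2 s)
  have hf : M.IsLiftable f := by
    intro i i'
    by_cases hii : i = i'
    · subst hii
      rw [M.diagonal, pow_one]
      ext1 z
      exact Module.involutive_reflection (hp2 i) z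
    by_cases h0 : M i i' = 0
    · rw [h0, pow_zero]
    have h1 := M.off_diagonal i i' hii
    refine reflection_pow_eq_one _ _ _ _ (hp2 i) (hp2 i') (M i i') (by omega) ?_
    rw [hp, hp]
    exact hM i i' hii
  refine ⟨α', αv', (LinearEquiv.automorphismGroup.toLinearMapMonoidHom).comp (cs.lift ⟨f, hf⟩),
    (0, fun _ => 1), ⟨hp2, ?_, ?_⟩, ?_⟩
  · intro s v
    rw [MonoidHom.comp_apply, cs.lift_apply_simple]
    exact Module.reflection_apply _ (hp2 s)
  · intro s s' h
    rw [hp, hp]; exact hpos s s' h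
  · intro t; simp [αv']

/-! ### Running infima -/

/-- Running infimum. -/
noncomputable def rinf (f : ℝ → ℝ) (t : ℝ) : ℝ := sInf (f '' Icc 0 t)

/-- Boundedness on `[0,T]`. -/
def Bd (T : ℝ) (f : ℝ → ℝ) : Prop := ∃ C, ∀ u ∈ Icc 0 T, |f u| ≤ C

theorem rinf_le {T : ℝ} {f : ℝ → ℝ} (h : Bd T f) {u t : ℝ} (hu : 0 ≤ u) (hut : u ≤ t)
    (ht : t ≤ T) : rinf f t ≤ f u := by
  obtain ⟨C, hC⟩ := h
  refine csInf_le ⟨-C, ?_⟩ ⟨u, ⟨hu, hut⟩, rfl⟩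
  rintro _ ⟨x, hx, rfl⟩
  exact (abs_le.1 (hC x ⟨hx.1, hx.2.trans ht⟩)).1

theorem le_rinf {f : ℝ → ℝ} {t c : ℝ} (ht : 0 ≤ t) (h : ∀ u, 0 ≤ u → u ≤ t → c ≤ f u) :
    c ≤ rinf f t := by
  refine le_csInf ⟨f 0, 0, ⟨le_rfl, ht⟩, rfl⟩ ?_
  rintro _ ⟨x, hx, rfl⟩
  exact h x hx.1 hx.2

theorem rinf_congr {f g : ℝ → ℝ} {t : ℝ} (h : ∀ u, 0 ≤ u → u ≤ t → f u = g u) :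
    rinf f t = rinf g t := by
  unfold rinf
  rw [Set.image_congr (fun u hu => h u hu.1 hu.2)]

theorem rinf_anti {T : ℝ} {f : ℝ → ℝ} (h : Bd T f) {u t : ℝ} (hu : 0 ≤ u) (hut : u ≤ t)
    (ht : t ≤ T) : rinf f t ≤ rinf f u :=
  le_rinf hu fun _ hx hxu => rinf_le h hx (hxu.trans hut) ht

theorem Bd.rinf {T : ℝ} {f : ℝ → ℝ} (h : Bd T f) : Bd T (rinf f) := by
  have h' := h
  obtain ⟨C, hC⟩ := h'
  refine ⟨C, fun u hu => abs_le.2 ⟨le_rinf hu.1 fun x hx hxu => ?_, ?_⟩⟩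
  · exact (abs_le.1 (hC x ⟨hx, hxu.trans hu.2⟩)).1
  · exact (rinf_le h hu.1 le_rfl hu.2).trans (abs_le.1 (hC u hu)).2

theorem Bd.add {T : ℝ} {f g : ℝ → ℝ} (hf : Bd T f) (hg : Bd T g) : Bd T (fun u => f u + g u) := by
  obtain ⟨C, hC⟩ := hf
  obtain ⟨D, hD⟩ := hg
  exact ⟨C + D, fun u hu => (abs_add_le _ _).trans (add_le_add (hC u hu) (hD u hu))⟩

theorem Bd.mul {T : ℝ} {f : ℝ → ℝ} (c : ℝ) (hf : Bd T f) : Bd T (fun u => c * f u) := by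
  obtain ⟨C, hC⟩ := hf
  exact ⟨|c| * C, fun u hu => by rw [abs_mul]; exact mul_le_mul_of_nonneg_left (hC u hu) (abs_nonneg c)⟩

theorem Bd.const {T : ℝ} (c : ℝ) : Bd T (fun _ => c) := ⟨|c|, fun _ _ => le_rfl⟩

theorem bd_of_cont {T : ℝ} {f : ℝ → ℝ} (h : ContinuousOn f (Icc 0 T)) : Bd T f := by
  obtain ⟨C, hC⟩ := isCompact_Icc.exists_bound_of_continuousOn h
  exact ⟨C, fun u hu => by simpa using hC u hu⟩

theorem rinf_attained {T : ℝ} {f : ℝ → ℝ} (h : ContinuousOn f (Icc 0 T)) {t : ℝ} (h0 : 0 ≤ t)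
    (ht : t ≤ T) : ∃ u, 0 ≤ u ∧ u ≤ t ∧ f u = rinf f t := by
  obtain ⟨u, hu, hm⟩ := isCompact_Icc.exists_isMinOn (nonempty_Icc.2 h0)
    (h.mono (Icc_subset_Icc_right ht))
  exact ⟨u, hu.1, hu.2, le_antisymm (le_rinf h0 fun x hx hxt => hm ⟨hx, hxt⟩)
    (rinf_le (bd_of_cont h) hu.1 hu.2 ht)⟩

theorem rinf_cont {T : ℝ} (hT : 0 ≤ T) {f : ℝ → ℝ} (h : ContinuousOn f (Icc 0 T)) :
    ContinuousOn (rinf f) (Icc 0 T) := by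
  set g := IccExtend hT ((Icc 0 T).domRestrict f) with hg
  have hgc : Continuous g := (continuousOn_iff_continuous_domRestrict.1 h).Icc_extend'
  have hgf : ∀ x ∈ Icc 0 T, g x = f x := fun x hx => by
    rw [hg, IccExtend_of_mem _ _ hx]; rfl
  have hc : Continuous fun t : ℝ => sInf ((fun u : ℝ => g (u * t)) '' Icc 0 1) := by
    apply isCompact_Icc.continuous_sInf
    have : Continuous fun p : ℝ × ℝ => g (p.2 * p.1) := by fun_prop
    exact this
  refine hc.continuousOn.congr fun t ht => ?_
  unfold rinf
  congr 1
  ext y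
  constructor
  · rintro ⟨u, hu, rfl⟩
    rcases ht.1.eq_or_lt with h0 | h0
    · refine ⟨0, by simp, ?_⟩
      have : u = 0 := by have := hu.1; have := hu.2; linarith
      simp only [zero_mul, this]
      exact hgf 0 ⟨le_rfl, hT⟩
    · refine ⟨u / t, ⟨div_nonneg hu.1 h0.le, (div_le_one h0).2 hu.2⟩, ?_⟩
      simp only [div_mul_cancel₀ _ h0.ne']
      exact hgf u ⟨hu.1, hu.2.trans ht.2⟩
  · rintro ⟨u, hu, rfl⟩
    have h1 : 0 ≤ u * t := mul_nonneg hu.1 ht.1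
    have h2 : u * t ≤ t := mul_le_of_le_one_left ht.1 hu.2
    exact ⟨u * t, ⟨h1, h2⟩, (hgf _ ⟨h1, h2.trans ht.2⟩).symm⟩

theorem rinf_const_of_eq {T : ℝ} {f : ℝ → ℝ} (h : Bd T f) {v u s : ℝ} (hv : 0 ≤ v) (hvu : v ≤ u)
    (hus : u ≤ s) (hs : s ≤ T) (e : rinf f s = rinf f v) : rinf f u = rinf f v := by
  have := rinf_anti h hv hvu (hus.trans hs)
  have := rinf_anti h (hv.trans hvu) hus hs
  linarith

theorem exch1 {T : ℝ} {γ : ℝ → ℝ} (h : ContinuousOn γ (Icc 0 T)) {v u s : ℝ} (hv : 0 ≤ v)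
    (hvu : v ≤ u) (hus : u ≤ s) (hs : s ≤ T) :
    ∃ u', v ≤ u' ∧ u' ≤ s ∧ γ u' ≤ γ u - 2 * rinf γ u + rinf γ v + rinf γ s := by
  have hb := bd_of_cont h
  have a1 := rinf_anti hb hv (hvu.trans hus) hs
  rcases a1.eq_or_lt with e | e
  · refine ⟨u, hvu, hus, ?_⟩
    rw [rinf_const_of_eq hb hv hvu hus hs e, e]; linarith
  · obtain ⟨u', h0, h1, h2⟩ := rinf_attained h (hv.trans (hvu.trans hus)) hs
    refine ⟨u', ?_, h1, ?_⟩
    · by_contra hc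
      have := rinf_le hb h0 (not_le.1 hc).le ((hvu.trans hus).trans hs)
      linarith
    · have b1 := rinf_anti hb hv hvu (hus.trans hs)
      have b2 := rinf_le hb (hv.trans hvu) le_rfl (hus.trans hs)
      linarith

theorem exch2 {T : ℝ} {γ : ℝ → ℝ} (h : ContinuousOn γ (Icc 0 T)) {v u s : ℝ} (hv : 0 ≤ v)
    (hvu : v ≤ u) (hus : u ≤ s) (hs : s ≤ T) :
    ∃ u', v ≤ u' ∧ u' ≤ s ∧ γ u' - 2 * rinf γ u' + rinf γ v + rinf γ s ≤ γ u := by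
  have hb := bd_of_cont h
  have hvs := hvu.trans hus
  have a1 := rinf_anti hb hv hvs hs
  rcases a1.eq_or_lt with e | e
  · refine ⟨u, hvu, hus, ?_⟩
    rw [rinf_const_of_eq hb hv hvu hus hs e, e]; linarith
  · obtain ⟨x, h0, h1, h2⟩ := rinf_attained h (hv.trans hvs) hs
    have hvx : v ≤ x := by
      by_contra hc
      have := rinf_le hb h0 (not_le.1 hc).le (hvs.trans hs)
      linarith
    have hsub : Icc v s ⊆ Icc 0 T := Icc_subset_Icc hv hs
    -- first time at which the level is reached
    have hK : IsCompact (Icc v s ∩ γ ⁻¹' Iic (rinf γ v)) :=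
      isCompact_Icc.of_isClosed_subset
        ((h.mono hsub).preimage_isClosed_of_isClosed isClosed_Icc isClosed_Iic) inter_subset_left
    obtain ⟨u', hu', hmin⟩ := hK.exists_isLeast ⟨x, ⟨hvx, h1⟩, by simp only [mem_preimage, mem_Iic]; linarith⟩
    have hle : γ u' ≤ rinf γ v := hu'.2
    have hge : rinf γ v ≤ γ u' := by
      by_contra hc
      push Not at hc
      have hγv := rinf_le hb hv le_rfl (hvs.trans hs)
      obtain ⟨y, hy, hy2⟩ := intermediate_value_Icc' hu'.1.1
        (h.mono ((Icc_subset_Icc_right hu'.1.2).trans hsub)) ⟨hc.le, hγv⟩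
      have := hmin ⟨⟨hy.1, hy.2.trans hu'.1.2⟩, hy2.le⟩
      have : y = u' := le_antisymm hy.2 this
      subst this; linarith
    have hr : rinf γ v ≤ rinf γ u' := by
      refine le_rinf (hv.trans hu'.1.1) fun y hy hyu => ?_
      by_contra hc
      push Not at hc
      have hvy : v ≤ y := by
        by_contra hc'
        have := rinf_le hb hy (not_le.1 hc').le (hvs.trans hs)
        linarith
      have := hmin ⟨⟨hvy, hyu.trans hu'.1.2⟩, hc.le⟩
      have : y = u' := le_antisymm hyu this
      subst this; linarith
    refine ⟨u', hu'.1.1, hu'.1.2, ?_⟩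
    have := rinf_le hb (hv.trans hvu) hus hs
    linarith

theorem swap {T : ℝ} {γ h : ℝ → ℝ} (hγ : ContinuousOn γ (Icc 0 T)) (hh : Bd T h) {τ : ℝ}
    (hτ : 0 ≤ τ) {s : ℝ} (hs0 : 0 ≤ s) (hs : s ≤ T) :
    rinf (fun u => τ * (γ u - 2 * rinf γ u) + rinf (fun v => h v + τ * rinf γ v) u) s =
      rinf (fun u => τ * γ u + rinf h u) s - τ * rinf γ s := by
  have hb := bd_of_cont hγ
  have hb2 : Bd T (fun v => h v + τ * rinf γ v) := hh.add (hb.rinf.mul τ)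
  have hb3 : Bd T (fun u => τ * γ u + rinf h u) := (hb.mul τ).add hh.rinf
  have hb4 : Bd T (fun u => τ * (γ u - 2 * rinf γ u) + rinf (fun v => h v + τ * rinf γ v) u) := by
    have := ((hb.add (hb.rinf.mul (-2))).mul τ).add hb2.rinf
    simpa [sub_eq_add_neg] using this
  apply le_antisymm
  · rw [le_sub_iff_add_le]
    refine le_rinf hs0 fun u hu hus => ?_
    rw [← sub_le_iff_le_add']
    refine le_rinf hu fun v hv hvu => ?_
    obtain ⟨u', h1, h2, h3⟩ := exch2 hγ hv hvu hus hs
    have e1 := rinf_le hb4 (hv.trans h1) h2 hs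
    have e2 := rinf_le hb2 hv h1 (h2.trans hs)
    have e3 := mul_le_mul_of_nonneg_left h3 hτ
    linarith
  · refine le_rinf hs0 fun u hu hus => ?_
    rw [← sub_le_iff_le_add']
    refine le_rinf hu fun v hv hvu => ?_
    obtain ⟨u', h1, h2, h3⟩ := exch1 hγ hv hvu hus hs
    have e1 := rinf_le hb3 (hv.trans h1) h2 hs
    have e2 := rinf_le hh hv h1 (h2.trans hs)
    have e3 := mul_le_mul_of_nonneg_left h3 hτ
    linarith

/-! ### The closed formula for alternating words -/

theorem rinf_mul {T : ℝ} {f : ℝ → ℝ} (h : ContinuousOn f (Icc 0 T)) {c : ℝ} (hc : 0 ≤ c) {t : ℝ}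
    (h0 : 0 ≤ t) (ht : t ≤ T) : rinf (fun u => c * f u) t = c * rinf f t := by
  obtain ⟨u, hu, hut, e⟩ := rinf_attained h h0 ht
  apply le_antisymm
  · rw [← e]
    exact rinf_le ((bd_of_cont h).mul c) hu hut ht
  · exact le_rinf h0 fun x hx hxt =>
      mul_le_mul_of_nonneg_left (rinf_le (bd_of_cont h) hx hxt ht) hc

/-- Iterated infimum. -/
noncomputable def Phi (Z : ℕ → ℝ → ℝ) (τ : ℕ → ℝ) : ℕ → ℕ → ℝ → ℝ
  | 0, _ => fun _ => 0
  | (m + 1), j => rinf (fun u => τ j * Z j u + Phi Z τ m (j + 1) u)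

theorem Phi_bd {T : ℝ} {Z : ℕ → ℝ → ℝ} (τ : ℕ → ℝ) (hZ : ∀ j, ContinuousOn (Z j) (Icc 0 T))
    (m j : ℕ) : Bd T (Phi Z τ m j) := by
  induction m generalizing j with
  | zero => exact Bd.const 0
  | succ m ih => exact (((bd_of_cont (hZ j)).mul _).add (ih (j + 1))).rinf

theorem Phi_inner {T : ℝ} {Z Z' : ℕ → ℝ → ℝ} {τ pp : ℕ → ℝ}
    (hZ : ∀ j, ContinuousOn (Z j) (Icc 0 T))
    (rec : ∀ j, pp (j + 1) * τ (j + 1) = τ j + τ (j + 2))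
    (per : ∀ j, Z (j + 2) = Z j) (i : ℕ) : ∀ (j : ℕ)
    (_ : ∀ n u, 0 ≤ u → u ≤ T → Z' (j + 2 * n) u = Z j u - 2 * rinf (Z j) u)
    (_ : ∀ n u, 0 ≤ u → u ≤ T → Z' (j + 2 * n + 1) u =
      Z (j + 1) u + pp (j + 2 * n + 1) * rinf (Z j) u)
    (_ : ∀ n, n ≤ i → 0 ≤ τ (j + 2 * n)) (s : ℝ) (_ : 0 ≤ s) (_ : s ≤ T),
    Phi Z' τ (2 * i) j s = Phi Z τ (2 * i + 1) j s - τ j * rinf (Z j) s := by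
  induction i with
  | zero =>
    intro j _ _ hn s h0 hs
    simp only [Phi, add_zero]
    rw [rinf_mul (hZ j) (by simpa using hn 0 le_rfl) h0 hs, sub_self]
  | succ i ih =>
    intro j h1 h2 hn s h0 hs
    have IH := ih (j + 2)
      (fun n u hu huT => by
        rw [per, ← h1 (n + 1) u hu huT]; congr 1; ring)
      (fun n u hu huT => by
        have := h2 (n + 1) u hu huT
        rw [show j + 2 * (n + 1) + 1 = j + 2 + 2 * n + 1 by ring] at this
        rw [this, per, per])
      (fun n hni => by
        have := hn (n + 1) (by omega)
        rwa [show j + 2 * (n + 1) = j + 2 + 2 * n by ring] at this)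
    rw [per] at IH
    have hτ : 0 ≤ τ j := by simpa using hn 0 (by omega)
    have hb : Bd T (fun v => τ (j + 1) * Z (j + 1) v + Phi Z τ (2 * i + 1) (j + 2) v) :=
      ((bd_of_cont (hZ _)).mul _).add (Phi_bd τ hZ _ _)
    have sw := swap (hZ j) hb hτ h0 hs
    rw [show 2 * (i + 1) = (2 * i + 1) + 1 by ring, show 2 * i + 1 + 1 + 1 = (2 * i + 1 + 1) + 1 by ring]
    rw [Phi, Phi]
    refine Eq.trans ?_ sw
    refine rinf_congr fun u hu hus => ?_
    have e1 := h1 0 u hu (hus.trans hs)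
    simp only [Nat.mul_zero, add_zero] at e1
    rw [e1, Phi]
    congr 1
    refine rinf_congr fun v hv hvu => ?_
    have e2 := h2 0 v hv ((hvu.trans hus).trans hs)
    simp only [Nat.mul_zero, add_zero] at e2
    rw [e2, show j + 1 + 1 = j + 2 by ring, IH v hv ((hvu.trans hus).trans hs)]
    have e3 : Phi Z τ (2 * i + 1) (j + 2) v =
      rinf (fun u => τ (j + 2) * Z (j + 2) u + Phi Z τ (2 * i) (j + 2 + 1) u) v := rfl
    linear_combination (rinf (Z j) v) * rec j + e3

section Pit
set_option linter.unusedSectionVars false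
variable {V : Type*} [NormedAddCommGroup V] [NormedSpace ℝ V] [FiniteDimensional ℝ V]

/-- Continuous paths from the origin. -/
def Good (T : ℝ) (π : ℝ → V) : Prop := ContinuousOn π (Icc 0 T) ∧ π 0 = 0

theorem Good.coord {T : ℝ} {π : ℝ → V} (h : Good T π) (f : Module.Dual ℝ V) :
    ContinuousOn (fun u => f (π u)) (Icc 0 T) :=
  (LinearMap.continuous_of_finiteDimensional f).comp_continuousOn h.1

theorem pitman_apply (a : V) (f : Module.Dual ℝ V) (π : ℝ → V) (t : ℝ) :
    pitman a f π t = π t - rinf (fun u => f (π u)) t • a := rfl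

theorem Good.pit {T : ℝ} (hT : 0 ≤ T) {π : ℝ → V} (h : Good T π) (a : V)
    (f : Module.Dual ℝ V) : Good T (pitman a f π) := by
  refine ⟨h.1.sub ((rinf_cont hT (h.coord f)).smul continuousOn_const), ?_⟩
  rw [pitman_apply, h.2]
  have : rinf (fun u => f (π u)) 0 = 0 := by simp [rinf, h.2]
  rw [this]; simp

variable {B : Type*} {α : B → V} {αv : B → Module.Dual ℝ V}

theorem pitmanWord_cons (s : B) (l : List B) (π : ℝ → V) :
    pitmanWord α αv (s :: l) π = pitman (α s) (αv s) (pitmanWord α αv l π) := rfl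

theorem pitmanWord_nil (π : ℝ → V) : pitmanWord α αv [] π = π := rfl

theorem pitmanWord_append (l m : List B) (π : ℝ → V) :
    pitmanWord α αv (l ++ m) π = pitmanWord α αv l (pitmanWord α αv m π) := by
  induction l with
  | nil => rfl
  | cons s l ih => rw [List.cons_append, pitmanWord_cons, ih, pitmanWord_cons]

theorem Good.word {T : ℝ} (hT : 0 ≤ T) {π : ℝ → V} (h : Good T π) (l : List B) :
    Good T (pitmanWord α αv l π) := by
  induction l with
  | nil => exact h
  | cons s l ih => exact ih.pit hT _ _

theorem pitman_congr {T : ℝ} {π π' : ℝ → V} (h : EqOn π π' (Icc 0 T)) (a : V)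
    (f : Module.Dual ℝ V) : EqOn (pitman a f π) (pitman a f π') (Icc 0 T) := by
  intro t ht
  rw [pitman_apply, pitman_apply, h ht,
    rinf_congr fun u hu hut => by rw [h ⟨hu, hut.trans ht.2⟩]]

theorem pitmanWord_congr {T : ℝ} {π π' : ℝ → V} (h : EqOn π π' (Icc 0 T)) (l : List B) :
    EqOn (pitmanWord α αv l π) (pitmanWord α αv l π') (Icc 0 T) := by
  induction l with
  | nil => exact h
  | cons s l ih => exact pitman_congr ih _ _

variable (α αv) in
/-- Coefficients of the alternating word. -/
noncomputable def AA (a b : B) (k : ℕ) (π : ℝ → V) : ℝ → ℝ :=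
  Phi (fun j u => αv (cc a b j) (π u)) (tau (-αv a (α b)) (-αv b (α a))) k 0

theorem inner' (hpair : ∀ s, αv s (α s) = 2) {T : ℝ} {π : ℝ → V} (h : Good T π)
    (a b : B) (i j : ℕ) (hn : ∀ n, n ≤ i → 0 ≤ tau (-αv a (α b)) (-αv b (α a)) (j + 2 * n))
    (s : ℝ) (h0 : 0 ≤ s) (hs : s ≤ T) :
    Phi (fun k u => αv (cc a b k) (pitman (α (cc a b j)) (αv (cc a b j)) π u))
      (tau (-αv a (α b)) (-αv b (α a))) (2 * i) j s =
    Phi (fun k u => αv (cc a b k) (π u)) (tau (-αv a (α b)) (-αv b (α a))) (2 * i + 1) j s -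
      tau (-αv a (α b)) (-αv b (α a)) j * rinf (fun u => αv (cc a b j) (π u)) s := by
  have ccn : ∀ n k, cc a b (k + 2 * n) = cc a b k := by
    intro n; induction n with
    | zero => intro k; rfl
    | succ n ih => intro k; rw [show k + 2 * (n + 1) = (k + 2 * n) + 2 by ring, cc_two, ih]
  refine Phi_inner (Z := fun k u => αv (cc a b k) (π u))
    (pp := fun k => -αv (cc a b k) (α (cc a b (k + 1)))) (fun j => h.coord _) ?_ ?_ i j ?_ ?_ hn
    s h0 hs
  · intro k
    have := (pair_cc hpair a b (k + 1)).2
    simp only [this, tau]; ring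
  · intro k; simp only [cc_two]
  · intro n u _ _
    simp only [ccn, pitman_apply, map_sub, map_smul, hpair, smul_eq_mul]; ring
  · intro n u _ _
    rw [show j + 2 * n + 1 + 1 = j + 2 * (n + 1) by ring,
      show j + 2 * n + 1 = (j + 1) + 2 * n by ring]
    simp only [ccn, pitman_apply, map_sub, map_smul, smul_eq_mul]; ring

theorem AA_same (hpair : ∀ s, αv s (α s) = 2) {T : ℝ} {π : ℝ → V} (h : Good T π)
    (a b : B) (i : ℕ) (hn : ∀ n, n ≤ 2 * i → 0 ≤ tau (-αv a (α b)) (-αv b (α a)) n)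
    (s : ℝ) (h0 : 0 ≤ s) (hs : s ≤ T) :
    AA α αv a b (2 * i) (pitman (α a) (αv a) π) s =
      AA α αv a b (2 * i + 1) π s - rinf (fun u => αv a (π u)) s := by
  have := inner' hpair h a b i 0 (fun n hni => hn _ (by omega)) s h0 hs
  have e : cc a b 0 = a := by simp [cc]
  rw [e] at this
  rw [AA, AA, this]
  simp [tau]

theorem AA_diff (hpair : ∀ s, αv s (α s) = 2) {T : ℝ} {π : ℝ → V} (h : Good T π)
    (a b : B) (i : ℕ) (hn : ∀ n, n ≤ 2 * i + 1 → 0 ≤ tau (-αv a (α b)) (-αv b (α a)) n)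
    (s : ℝ) (h0 : 0 ≤ s) (hs : s ≤ T) :
    AA α αv a b (2 * i + 1) (pitman (α b) (αv b) π) s = AA α αv a b (2 * i + 2) π s := by
  have e : cc a b 1 = b := by simp [cc]
  have e0 : cc a b 0 = a := by simp [cc]
  rw [AA, AA, Phi, Phi]
  refine rinf_congr fun u hu hus => ?_
  have := inner' hpair h a b i 1 (fun n hni => hn _ (by omega)) u hu (hus.trans hs)
  rw [e] at this
  rw [zero_add, this]
  simp only [tau, e0, pitman_apply, map_sub, map_smul, smul_eq_mul]
  ring

theorem alt_word (hpair : ∀ s, αv s (α s) = 2) {T : ℝ} (hT : 0 ≤ T) (a b : B) (k : ℕ) :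
    ∀ (_ : ∀ n, n < k → 0 ≤ tau (-αv a (α b)) (-αv b (α a)) n)
    (_ : ∀ n, n < k → 0 ≤ tau (-αv b (α a)) (-αv a (α b)) n)
    (π : ℝ → V) (_ : Good T π) (t : ℝ) (_ : 0 ≤ t) (_ : t ≤ T),
    pitmanWord α αv (alt a b k) π t =
      π t - AA α αv a b k π t • α a - AA α αv b a (k - 1) π t • α b := by
  induction k with
  | zero =>
    intro _ _ π _ t _ _
    simp [alt, pitmanWord_nil, AA, Phi]
  | succ k ih =>
    intro h1 h2 π hπ t h0 ht
    rw [alt_succ', pitmanWord_append, pitmanWord_cons, pitmanWord_nil]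
    rw [ih (fun n hn => h1 n (by omega)) (fun n hn => h2 n (by omega)) _ (hπ.pit hT _ _) t h0 ht]
    rw [Nat.add_sub_cancel]
    rcases Nat.even_or_odd' k with ⟨i, rfl | rfl⟩
    · have e : cc a b (2 * i) = a := by simp [cc]
      rw [e, AA_same hpair hπ a b i (fun n hn => h1 n (by omega)) t h0 ht]
      have : AA α αv b a (2 * i - 1) (pitman (α a) (αv a) π) t = AA α αv b a (2 * i) π t := by
        rcases i with _ | i
        · rfl
        · exact AA_diff hpair hπ b a i (fun n hn => h2 n (by omega)) t h0 ht
      rw [this, pitman_apply]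
      module
    · have e : cc a b (2 * i + 1) = b := by simp [cc]
      rw [e, AA_diff hpair hπ a b i (fun n hn => h1 n (by omega)) t h0 ht, Nat.add_sub_cancel,
        AA_same hpair hπ b a i (fun n hn => h2 n (by omega)) t h0 ht, pitman_apply]
      module

theorem AA_drop (a b : B) (m : ℕ)
    (h0 : tau (-αv a (α b)) (-αv b (α a)) m = 0) (π : ℝ → V) (t : ℝ) (ht : 0 ≤ t) :
    AA α αv a b (m + 1) π t = AA α αv a b m π t := by
  rw [AA, AA]
  generalize tau (-αv a (α b)) (-αv b (α a)) = τ at h0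
  generalize hZ : (fun j u => αv (cc a b j) (π u)) = Z
  clear hZ
  suffices H : ∀ m j, τ (j + m) = 0 → ∀ t, 0 ≤ t → Phi Z τ (m + 1) j t = Phi Z τ m j t from
    H m 0 (by simpa using h0) t ht
  intro m
  induction m with
  | zero =>
    intro j hj t ht
    simp only [add_zero] at hj
    simp only [Phi, hj, zero_mul, add_zero, rinf]
    rw [Set.Nonempty.image_const (nonempty_Icc.2 ht), csInf_singleton]
  | succ m ih =>
    intro j hj t ht
    rw [Phi, Phi]
    refine rinf_congr fun u hu hut => ?_
    exact congrArg (τ j * Z j u + ·) (ih (j + 1) (by rw [← hj]; congr 1; ring) u hu)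

theorem braid {W : Type*} [Group W] {M : CoxeterMatrix B} (cs : CoxeterSystem M W)
    {ρ : W →* Module.End ℝ V} (hr : RefRep cs α αv ρ) {T : ℝ} (hT : 0 ≤ T) (a b : B) (hab : a ≠ b)
    (hM : M a b ≠ 0) (π : ℝ → V) (hπ : Good T π) :
    EqOn (pitmanWord α αv (alt a b (M a b)) π) (pitmanWord α αv (alt b a (M a b)) π) (Icc 0 T) := by
  intro t ht
  have h1 := hr.pos a b hab
  have h2 := hr.pos b a hab.symm
  rw [M.symmetric b a] at h2
  have hne : M a b ≠ 1 := M.off_diagonal a b hab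
  have n1 : ∀ n, n < M a b → 0 ≤ tau (-αv a (α b)) (-αv b (α a)) n :=
    fun n hn => h1.nonneg n (Or.inr hn) hne
  have n2 : ∀ n, n < M a b → 0 ≤ tau (-αv b (α a)) (-αv a (α b)) n :=
    fun n hn => h2.nonneg n (Or.inr hn) hne
  rw [alt_word hr.pair hT a b _ n1 n2 π hπ t ht.1 ht.2,
    alt_word hr.pair hT b a _ n2 n1 π hπ t ht.1 ht.2]
  obtain ⟨m, hm⟩ : ∃ m, M a b = m + 1 := ⟨M a b - 1, by omega⟩
  have z1 := h1.2 (by omega)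
  have z2 := h2.2 (by omega)
  rw [hm, Nat.add_sub_cancel] at z1 z2
  rw [hm, Nat.add_sub_cancel, AA_drop a b m z1 π t ht.1, AA_drop b a m z2 π t ht.1]
  module

theorem word_indep {W : Type*} [Group W] {M : CoxeterMatrix B} (cs : CoxeterSystem M W)
    (h2 : ∀ (w : W) (a b : B), a ≠ b → cs.IsLeftDescent w a → cs.IsLeftDescent w b →
      M a b ≠ 0 ∧ ∃ u', w = cs.wordProd (alt a b (M a b)) * u' ∧
      cs.length w = M a b + cs.length u')
    {ρ : W →* Module.End ℝ V} (hr : RefRep cs α αv ρ) {T : ℝ} (hT : 0 ≤ T)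
    (l m : List B) (hlm : cs.wordProd l = cs.wordProd m) (hl : cs.IsReduced l)
    (hm : cs.IsReduced m) (π : ℝ → V) (hπ : Good T π) :
    EqOn (pitmanWord α αv l π) (pitmanWord α αv m π) (Icc 0 T) := by
  refine matsumoto cs h2 (fun l m => ∀ π : ℝ → V, Good T π →
    EqOn (pitmanWord α αv l π) (pitmanWord α αv m π) (Icc 0 T)) ?_ ?_ ?_ ?_ _ l m rfl hlm hl hm π hπ
  · intro l π _; exact fun _ _ => rfl
  · intro l m n h1 h2 π hπ; exact (h1 π hπ).trans (h2 π hπ)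
  · intro s l m h π hπ
    exact pitman_congr (h π hπ) _ _
  · intro a b l hab hM π hπ
    rw [pitmanWord_append, pitmanWord_append]
    exact braid cs hr hT a b hab hM _ (hπ.word hT l)

/-! ### Path reversal -/

/-- Path reversal. -/
def kap (T : ℝ) (π : ℝ → V) : ℝ → V := fun t => π (T - t) - π T

theorem Good.kap {T : ℝ} {π : ℝ → V} (h : Good T π) : Good T (kap T π) := by
  refine ⟨ContinuousOn.sub (h.1.comp (by fun_prop) ?_) continuousOn_const, by simp [PitmanDual.kap]⟩
  intro t ht
  exact ⟨by linarith [ht.2], by linarith [ht.1]⟩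

theorem kap_congr {T : ℝ} {π π' : ℝ → V} (h : EqOn π π' (Icc 0 T)) :
    EqOn (kap T π) (kap T π') (Icc 0 T) := by
  intro t ht
  rw [kap, kap, h ⟨by linarith [ht.2], by linarith [ht.1]⟩, h ⟨ht.1.trans ht.2, le_rfl⟩]

theorem kap_kap {T : ℝ} {π : ℝ → V} (h : Good T π) : kap T (kap T π) = π := by
  funext t
  simp [kap, h.2]

theorem kap_T {T : ℝ} {π : ℝ → V} (h : Good T π) : kap T π T = - π T := by
  simp [kap, h.2]

theorem Good.congr {T : ℝ} (hT : 0 ≤ T) {π π' : ℝ → V} (h : Good T π)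
    (e : EqOn π' π (Icc 0 T)) : Good T π' :=
  ⟨h.1.congr e, (e ⟨le_rfl, hT⟩).trans h.2⟩

theorem rinf_rev {T : ℝ} {X : ℝ → ℝ} (h : ContinuousOn X (Icc 0 T)) {t : ℝ} (h0 : 0 ≤ t)
    (ht : t ≤ T) : rinf (fun u => X (T - u) - X T) (T - t) = sInf (X '' Icc t T) - X T := by
  obtain ⟨u, hu, hm⟩ := isCompact_Icc.exists_isMinOn (nonempty_Icc.2 ht)
    (h.mono (Icc_subset_Icc_left h0))
  have e1 : sInf (X '' Icc t T) = X u := by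
    refine IsLeast.csInf_eq ⟨⟨u, hu, rfl⟩, ?_⟩
    rintro _ ⟨x, hx, rfl⟩
    exact hm hx
  have e2 : rinf (fun u => X (T - u) - X T) (T - t) = X u - X T := by
    refine IsLeast.csInf_eq ⟨⟨T - u, ⟨by linarith [hu.2], by linarith [hu.1]⟩, by simp⟩, ?_⟩
    rintro _ ⟨x, hx, rfl⟩
    have : X u ≤ X (T - x) := hm ⟨by linarith [hx.2], by linarith [hx.1]⟩
    simp only
    linarith
  rw [e1, e2]

theorem copitman_eq {T : ℝ} {π : ℝ → V} (h : Good T π) (a : V) (f : Module.Dual ℝ V) :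
    EqOn (copitman T a f π) (kap T (pitman a f (kap T π))) (Icc 0 T) := by
  intro t ht
  have hT := ht.1.trans ht.2
  have e1 := rinf_rev (h.coord f) ht.1 ht.2
  have e2 := rinf_rev (h.coord f) le_rfl hT
  rw [sub_zero] at e2
  have k : (fun u => f (kap T π u)) = fun u => f (π (T - u)) - f (π T) := by
    funext u; simp [kap]
  have k2 : kap T (pitman a f (kap T π)) t =
      pitman a f (kap T π) (T - t) - pitman a f (kap T π) T := rfl
  rw [k2, pitman_apply, pitman_apply, k, e1, e2]
  simp only [kap, copitman, sub_sub_cancel, sub_self, h.2]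
  module

theorem copitman_congr {T : ℝ} {π π' : ℝ → V} (h : EqOn π π' (Icc 0 T)) (a : V)
    (f : Module.Dual ℝ V) : EqOn (copitman T a f π) (copitman T a f π') (Icc 0 T) := by
  intro t ht
  simp only [copitman]
  rw [h ht, Set.image_congr (fun u (hu : u ∈ Icc t T) => by rw [h ⟨ht.1.trans hu.1, hu.2⟩]),
    Set.image_congr (fun u (hu : u ∈ Icc 0 T) => by rw [h hu])]

theorem copitmanWord_cons (T : ℝ) (s : B) (l : List B) (π : ℝ → V) :
    copitmanWord T α αv (s :: l) π = copitman T (α s) (αv s) (copitmanWord T α αv l π) := rfl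

theorem copitmanWord_eq {T : ℝ} (hT : 0 ≤ T) {π : ℝ → V} (h : Good T π) (l : List B) :
    EqOn (copitmanWord T α αv l π) (kap T (pitmanWord α αv l (kap T π))) (Icc 0 T) := by
  induction l with
  | nil =>
    intro t _
    rw [pitmanWord_nil, kap_kap h]; rfl
  | cons s l ih =>
    have g := (Good.kap h).word (α := α) (αv := αv) hT l
    refine (copitman_congr ih _ _).trans ((copitman_eq g.kap _ _).trans ?_)
    rw [kap_kap g]
    exact fun _ _ => rfl

theorem Good.coword {T : ℝ} (hT : 0 ≤ T) {π : ℝ → V} (h : Good T π) (l : List B) :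
    Good T (copitmanWord T α αv l π) :=
  ((Good.kap h).word hT l).kap.congr hT (copitmanWord_eq hT h l)

theorem Good.copit {T : ℝ} (hT : 0 ≤ T) {π : ℝ → V} (h : Good T π) (a : V)
    (f : Module.Dual ℝ V) : Good T (copitman T a f π) :=
  ((Good.kap h).pit hT a f).kap.congr hT (copitman_eq h a f)

theorem pitman_copitman {T : ℝ} (hT : 0 ≤ T) {π : ℝ → V} (h : Good T π) (a : V)
    (f : Module.Dual ℝ V) (hfa : f a = 2) :
    EqOn (pitman a f (copitman T a f π)) (pitman a f π) (Icc 0 T) := by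
  refine (pitman_congr (copitman_eq h a f) a f).trans ?_
  intro t ht
  set γ : ℝ → ℝ := fun u => f (kap T π u) with hγ
  have hγc : ContinuousOn γ (Icc 0 T) := h.kap.coord f
  have hE : ∀ u, kap T (pitman a f (kap T π)) u = π u - (rinf γ (T - u) - rinf γ T) • a := by
    intro u
    have k2 : kap T (pitman a f (kap T π)) u =
      pitman a f (kap T π) (T - u) - pitman a f (kap T π) T := rfl
    have k3 : kap T π (T - u) = π u - π T := by simp [kap]
    rw [k2, pitman_apply, pitman_apply, kap_T h, k3]
    module
  have hX : ∀ u, f (π u) = γ (T - u) + f (π T) := by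
    intro u; simp [hγ, kap]
  have hfE : ∀ u, f (kap T (pitman a f (kap T π)) u) =
      f (π u) - 2 * (rinf γ (T - u) - rinf γ T) := by
    intro u; rw [hE]; simp [hfa]; ring
  have gE : Good T (kap T (pitman a f (kap T π))) := (h.kap.pit hT a f).kap
  have key : rinf γ (T - t) - rinf γ T + rinf (fun u => f (kap T (pitman a f (kap T π)) u)) t =
      rinf (fun u => f (π u)) t := by
    apply le_antisymm
    · refine le_rinf ht.1 fun u hu hut => ?_
      obtain ⟨r, h1, h2, h3⟩ := exch2 hγc (v := T - t) (u := T - u) (s := T)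
        (by linarith [ht.2]) (by linarith) (by linarith) le_rfl
      have := rinf_le (bd_of_cont (gE.coord f)) (u := T - r) (t := t) (by linarith) (by linarith) ht.2
      rw [hfE, hX, sub_sub_cancel] at this
      rw [hX u]
      linarith
    · rw [← sub_le_iff_le_add']
      refine le_rinf ht.1 fun u hu hut => ?_
      obtain ⟨r, h1, h2, h3⟩ := exch1 hγc (v := T - t) (u := T - u) (s := T)
        (by linarith [ht.2]) (by linarith) (by linarith) le_rfl
      have := rinf_le (bd_of_cont (h.coord f)) (u := T - r) (t := t) (by linarith) (by linarith) ht.2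
      rw [hX, sub_sub_cancel] at this
      rw [hfE, hX u]
      linarith
  rw [pitman_apply, pitman_apply, ← key, hE t]
  module

/-! ### The invariant quadratic form -/

theorem exists_form {W : Type*} [Group W] [Finite W] {M : CoxeterMatrix B}
    (cs : CoxeterSystem M W) {ρ : W →* Module.End ℝ V} (hr : RefRep cs α αv ρ) :
    ∃ (q : V → ℝ) (c : B → ℝ), (∀ s, 0 < c s) ∧
      (∀ s v x, q (v + x • α s) = q v + c s * (x * (αv s v + x))) ∧ ∀ v, q (-v) = q v := by
  classical
  have := Fintype.ofFinite W
  set b := Module.finBasis ℝ V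
  set N : V → V → ℝ := fun u v => ∑ w : W, ∑ i, b.coord i (ρ w u) * b.coord i (ρ w v) with hN
  have hadd : ∀ u u' v x, N (u + x • u') v = N u v + x * N u' v := by
    intro u u' v x
    simp only [hN, Finset.mul_sum, ← Finset.sum_add_distrib]
    refine Finset.sum_congr rfl fun w _ => Finset.sum_congr rfl fun i _ => ?_
    simp only [map_add, map_smul, smul_eq_mul]; ring
  have hcomm : ∀ u v, N u v = N v u := by
    intro u v
    simp only [hN]
    exact Finset.sum_congr rfl fun w _ => Finset.sum_congr rfl fun i _ => mul_comm _ _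
  have hinv : ∀ g u v, N (ρ g u) (ρ g v) = N u v := by
    intro g u v
    simp only [hN, ← Module.End.mul_apply, ← map_mul]
    exact Fintype.sum_equiv (Equiv.mulRight g) _ _ fun w => rfl
  have hpos : ∀ s, 0 < N (α s) (α s) := by
    intro s
    have hne : α s ≠ 0 := by
      intro h0
      have := hr.pair s
      rw [h0] at this; simp at this
    have h1 : ∃ i, b.coord i (α s) ≠ 0 := by
      by_contra hc
      push Not at hc
      exact hne (b.forall_coord_eq_zero_iff.1 hc)
    obtain ⟨i, hi⟩ := h1
    refine Finset.sum_pos' (fun w _ => Finset.sum_nonneg fun i _ => mul_self_nonneg _)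
      ⟨1, Finset.mem_univ _, ?_⟩
    refine Finset.sum_pos' (fun i _ => mul_self_nonneg _) ⟨i, Finset.mem_univ _, ?_⟩
    simpa using mul_self_pos.2 hi
  refine ⟨fun v => N v v, fun s => N (α s) (α s), hpos, ?_, ?_⟩
  · intro s v x
    have e1 := hinv (cs.simple s) v (α s)
    rw [hr.act, hr.act, hr.pair, sub_eq_add_neg, ← neg_smul, hadd,
      hcomm v, hcomm (α s), show α s - (2 : ℝ) • α s = 0 + (-1 : ℝ) • α s by module,
      hadd, hadd] at e1
    have z : ∀ v, N 0 v = 0 := by intro v; simp [hN]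
    rw [z, z] at e1
    simp only
    rw [hadd, hcomm v, hcomm (α s), hadd, hadd]
    rw [hcomm v (α s)]
    linear_combination x * (-e1) + x * hcomm (α s) v
  · intro v
    simp [hN]

theorem word_form {W : Type*} [Group W] {M : CoxeterMatrix B}
    (cs : CoxeterSystem M W) {ρ : W →* Module.End ℝ V} (hr : RefRep cs α αv ρ)
    {q : V → ℝ} {c : B → ℝ} (hc : ∀ s, 0 < c s)
    (hq : ∀ s v x, q (v + x • α s) = q v + c s * (x * (αv s v + x))) {T : ℝ} (hT : 0 ≤ T)
    {π : ℝ → V} (h : Good T π) (l : List B) :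
    q (π T) ≤ q (pitmanWord α αv l π T) ∧
      (q (pitmanWord α αv l π T) = q (π T) → ∃ u : W, pitmanWord α αv l π T = ρ u (π T)) := by
  induction l with
  | nil => exact ⟨le_rfl, fun _ => ⟨1, by simp [pitmanWord_nil]⟩⟩
  | cons s l ih =>
    rw [pitmanWord_cons]
    have hg := h.word (α := α) (αv := αv) hT l
    generalize pitmanWord α αv l π = ζ at *
    obtain ⟨ih1, ih2⟩ := ih
    set x := rinf (fun u => αv s (ζ u)) T with hx
    have x0 : x ≤ 0 := by
      have := rinf_le (bd_of_cont (hg.coord (αv s))) le_rfl hT le_rfl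
      simpa [hg.2] using this
    have x1 : x ≤ αv s (ζ T) := rinf_le (bd_of_cont (hg.coord (αv s))) hT le_rfl le_rfl
    have e : pitman (α s) (αv s) ζ T = ζ T + (-x) • α s := by
      rw [pitman_apply]; module
    rw [e, hq]
    have p : 0 ≤ -x * (αv s (ζ T) + -x) := mul_nonneg (by linarith) (by linarith)
    have p2 := mul_nonneg (hc s).le p
    refine ⟨by linarith, fun heq => ?_⟩
    have h1 : q (ζ T) = q (π T) := by linarith
    obtain ⟨u, hu⟩ := ih2 h1
    have h2 : c s * (-x * (αv s (ζ T) + -x)) = 0 := by linarith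
    rcases mul_eq_zero.1 ((mul_eq_zero.1 h2).resolve_left (hc s).ne') with h3 | h3
    · exact ⟨u, by rw [h3, ← hu]; simp⟩
    · refine ⟨cs.simple s * u, ?_⟩
      rw [map_mul, Module.End.mul_apply, ← hu, hr.act]
      have : αv s (ζ T) = x := by linarith
      rw [this]; module

/-! ### The longest element -/

section Longest
variable {W : Type*} [Group W] {M : CoxeterMatrix B} (cs : CoxeterSystem M W)

theorem left_word (w₀ : W) (hw₀ : ∀ w : W, cs.length w ≤ cs.length w₀) (s : B) :
    cs.IsLeftDescent w₀ s ∧ ∃ l, cs.IsReduced (s :: l) ∧ cs.wordProd (s :: l) = w₀ := by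
  have h1 := hw₀ (cs.simple s * w₀)
  have h2 := cs.length_simple_mul_ne w₀ s
  have hd : cs.IsLeftDescent w₀ s := lt_of_le_of_ne h1 h2
  refine ⟨hd, ?_⟩
  obtain ⟨l, hl, e⟩ := cs.exists_isReduced (cs.simple s * w₀)
  have hp : cs.wordProd (s :: l) = w₀ := by
    rw [cs.wordProd_cons, ← e]; simp
  refine ⟨l, ?_, hp⟩
  have := cs.isLeftDescent_iff.1 hd
  rw [CoxeterSystem.IsReduced, ← e] at hl
  rw [CoxeterSystem.IsReduced, hp, List.length_cons]
  omega

theorem right_word (w₀ : W) (hw₀ : ∀ w : W, cs.length w ≤ cs.length w₀) (s : B) :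
    ∃ l, cs.IsReduced (l ++ [s]) ∧ cs.wordProd (l ++ [s]) = w₀ := by
  have h1 := hw₀ (w₀ * cs.simple s)
  have h2 := cs.length_mul_simple_ne w₀ s
  have hd : cs.IsRightDescent w₀ s := lt_of_le_of_ne h1 h2
  obtain ⟨l, hl, e⟩ := cs.exists_isReduced (w₀ * cs.simple s)
  have hp : cs.wordProd (l ++ [s]) = w₀ := by
    rw [cs.wordProd_append, ← e]; simp
  refine ⟨l, ?_, hp⟩
  have := cs.isRightDescent_iff.1 hd
  rw [CoxeterSystem.IsReduced, ← e] at hl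
  rw [CoxeterSystem.IsReduced, hp, List.length_append, List.length_singleton]
  omega

end Longest

theorem duality {W : Type*} [Group W] [Finite W] {M : CoxeterMatrix B}
    (cs : CoxeterSystem M W)
    (h2 : ∀ (w : W) (a b : B), a ≠ b → cs.IsLeftDescent w a → cs.IsLeftDescent w b →
      M a b ≠ 0 ∧ ∃ u', w = cs.wordProd (alt a b (M a b)) * u' ∧
      cs.length w = M a b + cs.length u')
    {ρ : W →* Module.End ℝ V} (hr : RefRep cs α αv ρ) {T : ℝ} (hT : 0 ≤ T)
    (w₀ : W) (hw₀ : ∀ w : W, cs.length w ≤ cs.length w₀)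
    (l₁ l₂ : List B) (hl₁ : cs.wordProd l₁ = w₀) (hl₁red : cs.IsReduced l₁)
    (hl₂ : cs.wordProd l₂ = w₀) (hl₂red : cs.IsReduced l₂)
    (π : ℝ → V) (hπ : Good T π) :
    copitmanWord T α αv l₁ π T = ρ w₀ (pitmanWord α αv l₂ π T) := by
  have mT : T ∈ Icc 0 T := ⟨hT, le_rfl⟩
  have indep := fun l m e hl hm π hπ => word_indep cs h2 hr hT l m e hl hm π hπ
  have dom : ∀ l, cs.wordProd l = w₀ → cs.IsReduced l → ∀ ζ : ℝ → V, Good T ζ →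
      ∀ s, 0 ≤ αv s (pitmanWord α αv l ζ T) := by
    intro l hl hlr ζ hζ s
    obtain ⟨-, m, hm, hm2⟩ := left_word cs w₀ hw₀ s
    rw [indep l (s :: m) (hl.trans hm2.symm) hlr hm ζ hζ mT, pitmanWord_cons, pitman_apply]
    have hg := hζ.word (α := α) (αv := αv) hT m
    have x0 := rinf_le (bd_of_cont (hg.coord (αv s))) le_rfl hT le_rfl
    have x1 := rinf_le (bd_of_cont (hg.coord (αv s))) hT le_rfl le_rfl
    rw [hg.2, map_zero] at x0
    rw [map_sub, map_smul, hr.pair, smul_eq_mul]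
    linarith
  have absorb1 : ∀ l, cs.wordProd l = w₀ → cs.IsReduced l → ∀ ζ : ℝ → V, Good T ζ → ∀ s,
      EqOn (pitmanWord α αv l (copitman T (α s) (αv s) ζ)) (pitmanWord α αv l ζ) (Icc 0 T) := by
    intro l hl hlr ζ hζ s
    obtain ⟨m, hm, hm2⟩ := right_word cs w₀ hw₀ s
    refine (indep l _ (hl.trans hm2.symm) hlr hm _ (hζ.copit hT _ _)).trans
      (EqOn.trans ?_ (indep l _ (hl.trans hm2.symm) hlr hm _ hζ).symm)
    rw [pitmanWord_append, pitmanWord_append]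
    exact pitmanWord_congr (pitman_copitman hT hζ _ _ (hr.pair s)) m
  have absorb : ∀ l, cs.wordProd l = w₀ → cs.IsReduced l → ∀ (m : List B) (ζ : ℝ → V), Good T ζ →
      EqOn (pitmanWord α αv l (copitmanWord T α αv m ζ)) (pitmanWord α αv l ζ) (Icc 0 T) := by
    intro l hl hlr m ζ hζ
    induction m with
    | nil => exact fun _ _ => rfl
    | cons s m ih => exact (absorb1 l hl hlr _ (hζ.coword hT m) s).trans ih
  obtain ⟨q, c, hc, hq, hqn⟩ := exists_form cs hr
  set ξ := copitmanWord T α αv l₁ π with hξ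
  set η := pitmanWord α αv l₂ π with hη
  have gξ : Good T ξ := hπ.coword hT l₁
  have gη : Good T η := hπ.word hT l₂
  have e1 : pitmanWord α αv l₂ ξ T = η T := absorb l₂ hl₂ hl₂red l₁ π hπ mT
  have e2 : pitmanWord α αv l₁ (kap T π) T = - ξ T := by
    rw [hξ, copitmanWord_eq hT hπ l₁ mT, kap_T (hπ.kap.word hT l₁), neg_neg]
  have e3 : pitmanWord α αv l₁ (kap T η) T = - ξ T := by
    rw [← e2, ← absorb l₁ hl₁ hl₁red l₂ _ hπ.kap mT]
    refine pitmanWord_congr ?_ l₁ mT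
    have := copitmanWord_eq (α := α) (αv := αv) hT hπ.kap l₂
    rw [kap_kap hπ] at this
    exact this.symm
  have q1 := word_form cs hr hc hq hT gξ l₂
  have q2 := (word_form cs hr hc hq hT gη.kap l₁).1
  rw [e1] at q1
  rw [e3, kap_T gη, hqn, hqn] at q2
  obtain ⟨u, hu⟩ := q1.2 (le_antisymm q2 q1.1)
  have d1 : ∀ t, 0 ≤ αv t (η T) := dom l₂ hl₂ hl₂red π hπ
  have d2 : ∀ t, 0 ≤ αv t (- ξ T) := by
    rw [← e2]; exact dom l₁ hl₁ hl₁red _ hπ.kap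
  have d3 : ∀ t, 0 ≤ αv t (- ρ w₀ (η T)) := by
    intro t
    have hd := (left_word cs w₀ hw₀ t).1
    have p := (hr.positive cs _ (cs.simple t * w₀) rfl t
      (cs.isLeftDescent_iff_not_isLeftDescent_mul.1 hd)).1 _ d1
    rw [hr.neg] at p
    rwa [map_neg]
  have e4 : ρ (u⁻¹ * w₀⁻¹) (- ρ w₀ (η T)) = - ξ T := by
    rw [map_neg, ← Module.End.mul_apply, ← map_mul, inv_mul_cancel_right, hu,
      ← Module.End.mul_apply, ← map_mul]
    simp
  have := hr.dominant_unique cs _ (u⁻¹ * w₀⁻¹) rfl _ d3 (by rw [e4]; exact d2)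
  rw [e4] at this
  exact neg_injective this

end Pit

end PitmanDual

/-- Endpoint duality (Proposition 4.4 of Biane–Bougerol–O'Connell): if `W` is finite
with longest element `w₀`, then for every path `π`,
`(E_{w₀} π)(T) = w₀ ((P_{w₀} π)(T))`, where `E_{w₀}` and `P_{w₀}` are computed along
arbitrary reduced words `l₁`, `l₂` for `w₀` and `w₀` acts on `V` via the reflection
representation `ρ`. -/
theorem copitman_endpoint_duality
    {V : Type*} [NormedAddCommGroup V] [NormedSpace ℝ V] [FiniteDimensional ℝ V]
    (T : ℝ) (hT : 0 < T)
    {B : Type*} [Fintype B] {W : Type*} [Group W] [Finite W]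
    (M : CoxeterMatrix B) (cs : CoxeterSystem M W)
    (α : B → V) (αv : B → Module.Dual ℝ V)
    (hpair : ∀ s, αv s (α s) = 2)
    (ρ : W →* (V ≃ₗ[ℝ] V)) (hρinj : Function.Injective ρ)
    (hρs : ∀ s v, ρ (cs.simple s) v = v - αv s v • α s)
    (hM : ∀ s s' : B, s ≠ s' →
      (M s s' = 2 ∧ αv s (α s') = 0 ∧ αv s' (α s) = 0) ∨
      (αv s (α s') < 0 ∧ αv s' (α s) < 0 ∧
        αv s (α s') * αv s' (α s) = 4 * Real.cos (Real.pi / (M s s' : ℝ)) ^ 2))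
    (w₀ : W) (hw₀ : ∀ w : W, cs.length w ≤ cs.length w₀)
    (l₁ l₂ : List B) (hl₁ : cs.wordProd l₁ = w₀) (hl₁red : cs.IsReduced l₁)
    (hl₂ : cs.wordProd l₂ = w₀) (hl₂red : cs.IsReduced l₂)
    (π : ℝ → V) (hcont : ContinuousOn π (Set.Icc 0 T)) (h0 : π 0 = 0) :
    copitmanWord T α αv l₁ π T = ρ w₀ (pitmanWord α αv l₂ π T) := by
  have hpos : ∀ s s', s ≠ s' →
      PitmanDual.PosSeq (-αv s (α s')) (-αv s' (α s)) (M s s') := by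
    intro s s' hss
    refine PitmanDual.posSeq_of _ _ _ (M.off_diagonal s s' hss) ?_
    rcases hM s s' hss with ⟨h1, h2, h3⟩ | ⟨h1, h2, h3⟩
    · exact Or.inl ⟨h1, by rw [h2, neg_zero], by rw [h3, neg_zero]⟩
    · exact Or.inr ⟨by linarith, by linarith, by rw [neg_mul_neg, h3]⟩
  obtain ⟨α', αv', ρ', v, hr', hv⟩ := PitmanDual.exists_strict cs α αv hpair hM hpos
  have hr : PitmanDual.RefRep cs α αv
      ((LinearEquiv.automorphismGroup.toLinearMapMonoidHom (R := ℝ) (M := V)).comp ρ) :=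
    ⟨hpair, fun s v => hρs s v, hpos⟩
  exact PitmanDual.duality cs (fun w a b hab ha hb => hr'.two_descents cs v hv w a b hab ha hb)
    hr hT.le w₀ hw₀ l₁ l₂ hl₁ hl₁red hl₂ hl₂red π ⟨hcont, h0⟩
end
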